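/- For each odd prime p and each t ∈ F_p, set a_p(𝓔_t) = p − #{(x,y) ∈ F_p × F_p : y² = x³ + (t³+t)²·x}, and set A_p(𝓔) = (1/p) · Σ_{t ∈ F_p} a_p(𝓔_t). Then lim_{N → ∞} (1/N) · Σ_{odd primes p ≤ N} ( −A_p(𝓔) ) · log p = 1. -/

import Mathlib

open Filter

/-- The average fibral trace of Frobenius `A_p(𝓔)` of the elliptic surface
`𝓔 : y² = x³ + (T³ + T)² x`, where for `t ∈ F_p` the fibral trace is
`a_p(𝓔_t) = p − #{(x,y) ∈ F_p² : y² = x³ + (t³+t)² x}`. -/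
noncomputable def nagaoAverage (p : ℕ) : ℝ :=
  (1 / (p : ℝ)) * ∑ᶠ t : ZMod p,
    ((p : ℝ) - (Nat.card {xy : ZMod p × ZMod p //
      xy.2 ^ 2 = xy.1 ^ 3 + (t ^ 3 + t) ^ 2 * xy.1} : ℝ))

section PartA1

open Filter Topology MeasureTheory

/-- Key limit in the Wiener-Ikehara argument. -/
lemma WI_kernel_limit (B : ℝ → ℝ) (hBm : Measurable B) (M : ℝ) (hBM : ∀ u, |B u| ≤ M)
    (hB0 : ∀ u, u ≤ 0 → B u = 0) (h : ℂ → ℂ) (hh : ContinuousOn h {s | 0 ≤ s.re})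
    (hBh : ∀ δ : ℝ, 0 < δ → ∀ t : ℝ,
      ∫ u : ℝ, (B u : ℂ) * Complex.exp (-((δ : ℂ) + t * Complex.I) * u) = h (δ + t * Complex.I))
    (k : ℝ → ℂ) (hk : Continuous k) (hkc : HasCompactSupport k)
    (K : ℝ → ℝ) (hK : Integrable K)
    (hkK : ∀ v : ℝ, ∫ t : ℝ, k t * Complex.exp (t * v * Complex.I) = (K v : ℂ)) :
    Tendsto (fun x : ℝ => ∫ u : ℝ, B u * K (x - u)) atTop (𝓝 0) := by
  have hki : Integrable k := hk.integrable_of_hasCompactSupport hkc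
  have hM : 0 ≤ M := (abs_nonneg _).trans (hBM 0)
  have hBi : ∀ δ : ℝ, 0 < δ → Integrable (fun u : ℝ => B u * Real.exp (-δ * u)) := by
    intro δ hδ
    have h1 : IntegrableOn (fun u : ℝ => M * Real.exp (-δ * u)) (Set.Ioi 0) :=
      (integrableOn_exp_mul_Ioi (by linarith) 0).const_mul M
    have h2 : IntegrableOn (fun u : ℝ => B u * Real.exp (-δ * u)) (Set.Ioi 0) := by
      refine Integrable.mono' h1 (by fun_prop) (ae_of_all _ fun u => ?_)
      rw [norm_mul, Real.norm_eq_abs, Real.norm_eq_abs, Real.abs_exp]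
      exact mul_le_mul_of_nonneg_right (hBM u) (Real.exp_pos _).le
    rw [← integrableOn_univ, ← Set.Iic_union_Ioi (a := (0:ℝ))]
    refine IntegrableOn.union ?_ h2
    refine (integrableOn_zero).congr_fun (fun u hu => ?_) measurableSet_Iic
    simp [hB0 u hu]
  -- Fubini
  have hF : ∀ x : ℝ, ∀ δ : ℝ, 0 < δ →
      ∫ u : ℝ, (B u : ℂ) * Real.exp (-δ * u) * (K (x - u) : ℂ) =
      ∫ t : ℝ, k t * Complex.exp (t * x * Complex.I) * h (δ + t * Complex.I) := by
    intro x δ hδ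
    have e1 : ∀ u : ℝ, (B u : ℂ) * Real.exp (-δ * u) * (K (x - u) : ℂ) =
        ∫ t : ℝ, ((B u : ℂ) * Real.exp (-δ * u)) * (k t * Complex.exp (t * (x - u : ℝ) * Complex.I)) := by
      intro u
      rw [← hkK, integral_const_mul]
    simp_rw [e1]
    rw [integral_integral_swap]
    · refine integral_congr_ae (ae_of_all _ fun t => ?_)
      dsimp only
      rw [← hBh δ hδ t, ← integral_const_mul]
      refine integral_congr_ae (ae_of_all _ fun u => ?_)
      dsimp only
      push_cast
      have : Complex.exp (t * (x - u) * Complex.I) * Complex.exp (-δ * u) =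
        Complex.exp (t * x * Complex.I) * Complex.exp (-((δ : ℂ) + t * Complex.I) * u) := by
        rw [← Complex.exp_add, ← Complex.exp_add]; congr 1; ring
      linear_combination (B u : ℂ) * k t * this
    · have h1 : Integrable (fun z : ℝ × ℝ => (((B z.1 * Real.exp (-δ * z.1) : ℝ) : ℂ)) * k z.2)
          (volume.prod volume) := ((hBi δ hδ).ofReal (𝕜 := ℂ)).mul_prod hki
      refine h1.mono (by
        apply Measurable.aestronglyMeasurable
        have := hk.measurable
        unfold Function.uncurry
        fun_prop) (ae_of_all _ fun z => ?_)
      simp only [Function.uncurry, norm_mul]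
      have : ‖Complex.exp (z.2 * (x - z.1 : ℝ) * Complex.I)‖ = 1 := by
        have := Complex.norm_exp_ofReal_mul_I (z.2 * (x - z.1))
        push_cast at this ⊢
        exact this
      rw [this]
      push_cast
      simp
  -- limit δ → 0
  have hL : ∀ x : ℝ, ((∫ u : ℝ, B u * K (x - u) : ℝ) : ℂ) =
      ∫ t : ℝ, k t * Complex.exp (t * x * Complex.I) * h (t * Complex.I) := by
    intro x
    have hKx : Integrable (fun u => K (x - u)) := hK.comp_sub_left x
    have l1 : Tendsto (fun δ : ℝ => ∫ u : ℝ, (B u : ℂ) * Real.exp (-δ * u) * (K (x - u) : ℂ))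
        (𝓝[>] 0) (𝓝 (∫ u : ℝ, (B u : ℂ) * (K (x - u) : ℂ))) := by
      refine tendsto_integral_filter_of_dominated_convergence (fun u => M * |K (x - u)|) ?_ ?_ ?_ ?_
      · refine Eventually.of_forall fun δ => ?_
        have h1 := (hKx.ofReal (𝕜 := ℂ)).aestronglyMeasurable
        refine AEStronglyMeasurable.mul ?_ h1
        apply Measurable.aestronglyMeasurable
        fun_prop
      · filter_upwards [self_mem_nhdsWithin] with δ hδ
        refine ae_of_all _ fun u => ?_
        rw [norm_mul, norm_mul]
        simp only [Complex.norm_real, Real.norm_eq_abs, Real.abs_exp]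
        refine mul_le_mul_of_nonneg_right ?_ (abs_nonneg _)
        rcases le_or_gt u 0 with hu | hu
        · rw [hB0 u hu]; simpa using hM
        · have : Real.exp (-δ * u) ≤ 1 := by
            rw [Real.exp_le_one_iff]
            have : 0 < δ * u := mul_pos hδ hu
            linarith
          calc |B u| * Real.exp (-δ * u) ≤ M * 1 := mul_le_mul (hBM u) this (Real.exp_pos _).le hM
            _ = M := mul_one M
      · exact hKx.abs.const_mul M
      · refine ae_of_all _ fun u => ?_
        have : Continuous (fun δ : ℝ => (B u : ℂ) * Real.exp (-δ * u) * (K (x - u) : ℂ)) := by fun_prop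
        have := (this.tendsto 0).mono_left (nhdsWithin_le_nhds (s := Set.Ioi 0))
        simpa using this
    have l2 : Tendsto (fun δ : ℝ => ∫ t : ℝ, k t * Complex.exp (t * x * Complex.I) * h (δ + t * Complex.I))
        (𝓝[>] 0) (𝓝 (∫ t : ℝ, k t * Complex.exp (t * x * Complex.I) * h (t * Complex.I))) := by
      have hcomp : IsCompact (Set.image (fun z : ℝ × ℝ => (z.1 : ℂ) + z.2 * Complex.I)
          (Set.Icc 0 1 ×ˢ tsupport k)) :=
        (isCompact_Icc.prod hkc).image (by fun_prop)
      obtain ⟨D, hD⟩ := hcomp.exists_bound_of_continuousOn (f := h) (hh.mono (by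
        rintro _ ⟨z, hz, rfl⟩
        simpa using hz.1.1))
      refine tendsto_integral_filter_of_dominated_convergence (fun t => ‖k t‖ * D) ?_ ?_ ?_ ?_
      · filter_upwards [self_mem_nhdsWithin] with δ hδ
        apply Continuous.aestronglyMeasurable
        refine Continuous.mul (by fun_prop) ?_
        refine hh.comp_continuous (by fun_prop) fun t => ?_
        simpa using (le_of_lt hδ)
      · filter_upwards [Ioo_mem_nhdsGT (zero_lt_one' ℝ)] with δ hδ
        refine ae_of_all _ fun t => ?_
        rw [norm_mul, norm_mul]
        have : ‖Complex.exp (t * x * Complex.I)‖ = 1 := by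
          have := Complex.norm_exp_ofReal_mul_I (t * x)
          push_cast at this
          exact this
        rw [this, mul_one]
        by_cases ht : t ∈ tsupport k
        · refine mul_le_mul_of_nonneg_left (hD _ ⟨(δ, t), ⟨⟨hδ.1.le, hδ.2.le⟩, ht⟩, rfl⟩) (norm_nonneg _)
        · rw [image_eq_zero_of_notMem_tsupport ht]; simp
      · exact hki.norm.mul_const D
      · refine ae_of_all _ fun t => ?_
        refine Tendsto.const_mul _ ?_
        have hc : ContinuousWithinAt (fun δ : ℝ => h (δ + t * Complex.I)) (Set.Ici 0) 0 := by
          refine ContinuousOn.continuousWithinAt (s := Set.Ici 0) ?_ (by simp)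
          refine hh.comp (by fun_prop) fun δ hδ => ?_
          simpa using hδ
        have := hc.tendsto.mono_left (nhdsWithin_mono 0 Set.Ioi_subset_Ici_self)
        simpa using this
    have l3 := l2.congr' (by
      filter_upwards [self_mem_nhdsWithin] with δ hδ
      exact (hF x δ hδ).symm)
    have := tendsto_nhds_unique l1 l3
    rw [← this, ← integral_complex_ofReal]
    push_cast
    rfl
  -- Riemann-Lebesgue
  have hRL := Real.tendsto_integral_exp_smul_cocompact (fun t : ℝ => k t * h (t * Complex.I))
  have hT : Tendsto (fun x : ℝ => -x / (2 * Real.pi)) atTop (cocompact ℝ) := by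
    have : Tendsto (fun x : ℝ => -x / (2 * Real.pi)) atTop atBot :=
      tendsto_neg_atTop_atBot.atBot_div_const (by positivity)
    exact this.mono_right atBot_le_cocompact
  have h2 := hRL.comp hT
  have h3 : Tendsto (fun x : ℝ => ((∫ u : ℝ, B u * K (x - u) : ℝ) : ℂ)) atTop (𝓝 0) := by
    refine h2.congr fun x => ?_
    rw [hL x]
    simp only [Function.comp]
    refine integral_congr_ae (ae_of_all _ fun t => ?_)
    dsimp only
    rw [Circle.smul_def, Real.fourierChar_apply, smul_eq_mul]
    have : Complex.exp (↑(2 * Real.pi * -(t * (-x / (2 * Real.pi)))) * Complex.I) =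
        Complex.exp (t * x * Complex.I) := by
      congr 2
      have : 2 * Real.pi * -(t * (-x / (2 * Real.pi))) = t * x := by
        field_simp
      rw [this]; push_cast; ring
    rw [this]; ring
  have h4 := (Complex.continuous_re.tendsto 0).comp h3
  simpa [Function.comp_def] using h4

end PartA1

section PartA2

open Filter Topology MeasureTheory

/-- Triangle function. -/
noncomputable def WItri (t : ℝ) : ℂ := ((max 0 (1 - |t|) : ℝ) : ℂ)

lemma WItri_cont : Continuous WItri := by unfold WItri; fun_prop

lemma WItri_supp : ∀ t, t ∉ Set.Icc (-1:ℝ) 1 → WItri t = 0 := by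
  intro t ht
  have : 1 < |t| := by
    by_contra h
    exact ht (abs_le.mp (not_lt.mp h))
  simp only [WItri, Complex.ofReal_eq_zero]
  exact max_eq_left (by linarith)

lemma WItri_fourier (v : ℝ) :
    ∫ t : ℝ, WItri t * Complex.exp (t * v * Complex.I) = ((Real.sinc (v / 2) ^ 2 : ℝ) : ℂ) := by
  have h1 : ∫ t : ℝ, WItri t * Complex.exp (t * v * Complex.I) =
      ∫ t in (-1:ℝ)..1, WItri t * Complex.exp (t * v * Complex.I) := by
    rw [intervalIntegral.integral_of_le (by norm_num), ← integral_Icc_eq_integral_Ioc]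
    refine (setIntegral_eq_integral_of_forall_compl_eq_zero fun t ht => ?_).symm
    rw [WItri_supp t ht, zero_mul]
  have hc : Continuous fun t : ℝ => WItri t * Complex.exp (t * v * Complex.I) := by
    have := WItri_cont
    fun_prop
  rw [h1, ← intervalIntegral.integral_add_adjacent_intervals (b := 0)
    (hc.intervalIntegrable _ _) (hc.intervalIntegrable _ _)]
  have e1 : ∫ t in (-1:ℝ)..0, WItri t * Complex.exp (t * v * Complex.I) =
      ∫ t in (0:ℝ)..1, WItri t * Complex.exp (-(t * v * Complex.I)) := by
    rw [← neg_zero (G := ℝ), ← intervalIntegral.integral_comp_neg (a := 0) (b := 1)]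
    simp only [WItri, abs_neg, neg_zero]
    push_cast
    simp only [neg_mul]
  have hc' : Continuous fun t : ℝ => WItri t * Complex.exp (-(t * v * Complex.I)) := by
    have := WItri_cont
    fun_prop
  rw [e1, ← intervalIntegral.integral_add (hc'.intervalIntegrable _ _) (hc.intervalIntegrable _ _)]
  have e2 : ∫ t in (0:ℝ)..1, (WItri t * Complex.exp (-(t * v * Complex.I)) +
      WItri t * Complex.exp (t * v * Complex.I)) =
      ∫ t in (0:ℝ)..1, ((2 * (1 - t) * Real.cos (t * v) : ℝ) : ℂ) := by
    refine intervalIntegral.integral_congr fun t ht => ?_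
    rw [Set.uIcc_of_le (by norm_num)] at ht
    have : WItri t = 1 - t := by
      simp only [WItri]
      rw [abs_of_nonneg ht.1, max_eq_right (by linarith [ht.2])]
      push_cast; rfl
    simp only [this]
    push_cast
    rw [Complex.cos]
    simp only [neg_mul]
    ring
  rw [e2, intervalIntegral.integral_ofReal]
  congr 1
  rcases eq_or_ne v 0 with rfl | hv
  · simp
    rw [intervalIntegral.integral_sub (by simp) (by simp)]
    norm_num [integral_id]
  · have hd : ∀ t ∈ Set.uIcc (0:ℝ) 1, HasDerivAt (fun t : ℝ => 2 * ((1 - t) * Real.sin (t * v) / v - Real.cos (t * v) / v ^ 2))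
        (2 * (1 - t) * Real.cos (t * v)) t := by
      intro t _
      have hs : HasDerivAt (fun t : ℝ => Real.sin (t * v)) (Real.cos (t * v) * (1 * v)) t :=
        ((hasDerivAt_id t).mul_const v).sin
      have hcs : HasDerivAt (fun t : ℝ => Real.cos (t * v)) (-Real.sin (t * v) * (1 * v)) t :=
        ((hasDerivAt_id t).mul_const v).cos
      have h1t : HasDerivAt (fun t : ℝ => 1 - t) (-1) t := (hasDerivAt_id t).const_sub 1
      have := ((((h1t.mul hs).div_const v).sub (hcs.div_const (v^2))).const_mul 2)
      refine HasDerivAt.congr_deriv this ?_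
      have hv' : v * v⁻¹ = 1 := mul_inv_cancel₀ hv
      simp only [div_eq_mul_inv]
      linear_combination (2 * (1 - t) * Real.cos (t * v) + 2 * Real.sin (t * v) * v⁻¹) * hv'
    rw [intervalIntegral.integral_eq_sub_of_hasDerivAt hd (by
      apply Continuous.intervalIntegrable; fun_prop)]
    rw [Real.sinc_of_ne_zero (by simpa using hv)]
    have : Real.cos v = 1 - 2 * Real.sin (v/2)^2 := by
      have h := Real.cos_two_mul (v/2)
      rw [show 2 * (v/2) = v by ring] at h
      have := Real.sin_sq_add_cos_sq (v/2)
      linarith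
    simp
    rw [this]
    field_simp
    ring

lemma WI_sinc_integrable : Integrable fun v : ℝ => Real.sinc (v / 2) ^ 2 := by
  have h : Integrable fun v : ℝ => 8 * (1 + v ^ 2)⁻¹ := integrable_inv_one_add_sq.const_mul 8
  refine h.mono' (by
    have := Real.continuous_sinc
    apply Continuous.aestronglyMeasurable; fun_prop) (ae_of_all _ fun v => ?_)
  rw [Real.norm_eq_abs, abs_of_nonneg (sq_nonneg _)]
  have hp : 0 < 1 + v ^ 2 := by positivity
  rw [← div_eq_mul_inv, le_div_iff₀ hp]
  have a1 : Real.sinc (v/2) ^ 2 ≤ 1 := by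
    rw [sq_le_one_iff_abs_le_one]
    exact Real.abs_sinc_le_one _
  have a2 : Real.sinc (v/2) ^ 2 * v ^ 2 ≤ 4 := by
    rcases eq_or_ne v 0 with rfl | hv
    · simp
    · rw [Real.sinc_of_ne_zero (by simpa using hv)]
      have := Real.sin_sq_le_one (v/2)
      field_simp
      nlinarith
  nlinarith

lemma WI_sinc_integral_pos : 0 < ∫ v : ℝ, Real.sinc (v / 2) ^ 2 := by
  have := Real.continuous_sinc
  refine integral_pos_of_integrable_nonneg_nonzero (x := 0) (by fun_prop) WI_sinc_integrable
    (fun v => sq_nonneg _) (by simp)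

end PartA2

section PartA3

open Filter Topology MeasureTheory

lemma WI_tauber (φ : ℝ → ℝ) (hm : Measurable φ) (M : ℝ) (h0 : ∀ u, 0 ≤ φ u) (hM : ∀ u, φ u ≤ M)
    (hmono : ∀ u w, u ≤ w → φ u * Real.exp u ≤ φ w * Real.exp w)
    (hK : ∀ ε > 0, ∀ η > 0, ∃ K : ℝ → ℝ, (∀ v, 0 ≤ K v) ∧ Integrable K ∧ ∫ v, K v = 1 ∧
      (1 - ε ≤ ∫ v in Set.Icc (-η) η, K v) ∧
      Tendsto (fun x => ∫ u, (φ u - Set.indicator (Set.Ioi 0) (fun _ => (1:ℝ)) u) * K (x - u)) atTop (𝓝 0)) :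
    Tendsto φ atTop (𝓝 1) := by
  have hMn : 0 ≤ M := (h0 0).trans (hM 0)
  -- main estimate
  have main : ∀ ε, 0 < ε → ε < 1 → ∀ᶠ y in atTop,
      φ y * Real.exp (-(2 * ε)) * (1 - ε) ≤ 1 + ε ∧ 1 - ε ≤ φ y * Real.exp (2 * ε) + M * ε := by
    intro ε hε hε1
    obtain ⟨K, K0, Ki, K1, Kc, Kt⟩ := hK ε hε ε hε
    have hφi : ∀ x, Integrable (fun v => φ (x - v) * K v) := by
      intro x
      refine (Ki.const_mul M).mono' ?_ (ae_of_all _ fun v => ?_)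
      · exact ((hm.comp (measurable_const.sub measurable_id)).aestronglyMeasurable).mul
          Ki.aestronglyMeasurable
      · rw [norm_mul, Real.norm_eq_abs, Real.norm_eq_abs, abs_of_nonneg (h0 _), abs_of_nonneg (K0 v)]
        exact mul_le_mul_of_nonneg_right (hM _) (K0 v)
    have hlim : Tendsto (fun x => ∫ v, φ (x - v) * K v) atTop (𝓝 1) := by
      have hI : Tendsto (fun x => ∫ v in Set.Iio x, K v) atTop (𝓝 1) := by
        have := tendsto_setIntegral_of_monotone (μ := volume) (f := K) (s := fun x : ℝ => Set.Iio x)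
          (fun x => measurableSet_Iio) (fun a b hab => Set.Iio_subset_Iio hab) (by
            exact Ki.integrableOn)
        have e : (⋃ n : ℝ, Set.Iio n) = Set.univ := by
          ext z; simp
        rw [e] at this
        simpa [K1] using this
      have := Kt.add hI
      rw [zero_add] at this
      refine this.congr fun x => ?_
      have e1 : ∫ u, (φ u - Set.indicator (Set.Ioi 0) (fun _ => (1:ℝ)) u) * K (x - u) =
          ∫ v, (φ (x - v) - Set.indicator (Set.Ioi 0) (fun _ => (1:ℝ)) (x - v)) * K v := by
        rw [← integral_sub_left_eq_self _ volume x]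
        simp
      have e2 : ∫ v in Set.Iio x, K v = ∫ v, Set.indicator (Set.Ioi 0) (fun _ => (1:ℝ)) (x - v) * K v := by
        rw [← integral_indicator measurableSet_Iio]
        congr 1
        ext v
        by_cases hv : v < x
        · simp [Set.indicator, hv]
        · simp [Set.indicator, hv]
      have i2 : Integrable fun v => Set.indicator (Set.Ioi 0) (fun _ => (1:ℝ)) (x - v) * K v := by
        refine (Ki.indicator (measurableSet_Iio (a := x))).congr (ae_of_all _ fun v => ?_)
        by_cases hv : v < x
        · simp [Set.indicator, hv]
        · simp [Set.indicator, hv]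
      rw [e1, e2, ← integral_add _ i2]
      · congr 1; ext v; ring
      · simp_rw [sub_mul]
        exact (hφi x).sub i2
    have hup : ∀ y, φ y * Real.exp (-(2 * ε)) * (1 - ε) ≤ ∫ v, φ (y + ε - v) * K v := by
      intro y
      calc φ y * Real.exp (-(2 * ε)) * (1 - ε)
          ≤ φ y * Real.exp (-(2 * ε)) * ∫ v in Set.Icc (-ε) ε, K v :=
            mul_le_mul_of_nonneg_left Kc (mul_nonneg (h0 y) (Real.exp_pos _).le)
        _ = ∫ v in Set.Icc (-ε) ε, φ y * Real.exp (-(2 * ε)) * K v := by rw [integral_const_mul]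
        _ ≤ ∫ v in Set.Icc (-ε) ε, φ (y + ε - v) * K v := by
            refine setIntegral_mono_on (Ki.const_mul _).integrableOn (hφi _).integrableOn
              measurableSet_Icc fun v hv => ?_
            refine mul_le_mul_of_nonneg_right ?_ (K0 v)
            have h1 := hmono y (y + ε - v) (by linarith [hv.2])
            have h2 : φ y * Real.exp (-(2*ε)) ≤ φ y * Real.exp (y - (y + ε - v)) :=
              mul_le_mul_of_nonneg_left (Real.exp_le_exp.mpr (by linarith [hv.1])) (h0 y)
            refine h2.trans ?_
            rw [Real.exp_sub, ← mul_div_assoc, div_le_iff₀ (Real.exp_pos _)]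
            exact h1
        _ ≤ _ := setIntegral_le_integral (hφi _) (ae_of_all _ fun v => mul_nonneg (h0 _) (K0 v))
    have hlow : ∀ y, ∫ v, φ (y - ε - v) * K v ≤ φ y * Real.exp (2 * ε) + M * ε := by
      intro y
      rw [← integral_add_compl (measurableSet_Icc (a := -ε) (b := ε)) (hφi _)]
      have a1 : ∫ v in Set.Icc (-ε) ε, φ (y - ε - v) * K v ≤ φ y * Real.exp (2 * ε) := by
        calc ∫ v in Set.Icc (-ε) ε, φ (y - ε - v) * K v
            ≤ ∫ v in Set.Icc (-ε) ε, φ y * Real.exp (2 * ε) * K v := by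
              refine setIntegral_mono_on (hφi _).integrableOn (Ki.const_mul _).integrableOn
                measurableSet_Icc fun v hv => ?_
              refine mul_le_mul_of_nonneg_right ?_ (K0 v)
              have h1 := hmono (y - ε - v) y (by linarith [hv.1])
              have h2 : φ y * Real.exp (y - (y - ε - v)) ≤ φ y * Real.exp (2*ε) :=
                mul_le_mul_of_nonneg_left (Real.exp_le_exp.mpr (by linarith [hv.2])) (h0 y)
              refine le_trans ?_ h2
              rw [Real.exp_sub, ← mul_div_assoc, le_div_iff₀ (Real.exp_pos _)]
              exact h1
          _ = φ y * Real.exp (2 * ε) * ∫ v in Set.Icc (-ε) ε, K v := by rw [integral_const_mul]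
          _ ≤ φ y * Real.exp (2 * ε) * 1 := by
              refine mul_le_mul_of_nonneg_left ?_ (mul_nonneg (h0 y) (Real.exp_pos _).le)
              rw [← K1]
              exact setIntegral_le_integral Ki (ae_of_all _ K0)
          _ = _ := mul_one _
      have a2 : ∫ v in (Set.Icc (-ε) ε)ᶜ, φ (y - ε - v) * K v ≤ M * ε := by
        calc ∫ v in (Set.Icc (-ε) ε)ᶜ, φ (y - ε - v) * K v ≤ ∫ v in (Set.Icc (-ε) ε)ᶜ, M * K v := by
              refine setIntegral_mono_on (hφi _).integrableOn (Ki.const_mul _).integrableOn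
                measurableSet_Icc.compl fun v hv => ?_
              exact mul_le_mul_of_nonneg_right (hM _) (K0 v)
          _ = M * ∫ v in (Set.Icc (-ε) ε)ᶜ, K v := by rw [integral_const_mul]
          _ ≤ M * ε := by
              refine mul_le_mul_of_nonneg_left ?_ hMn
              have := integral_add_compl (measurableSet_Icc (a := -ε) (b := ε)) Ki
              linarith
      linarith
    have t1 : ∀ᶠ y in atTop, ∫ v, φ (y + ε - v) * K v < 1 + ε :=
      (hlim.comp (tendsto_atTop_add_const_right _ ε tendsto_id)).eventually_lt_const (by linarith)
    have t2 : ∀ᶠ y in atTop, 1 - ε < ∫ v, φ (y - ε - v) * K v :=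
      (hlim.comp (tendsto_atTop_add_const_right _ (-ε) tendsto_id)).eventually_const_lt (by linarith)
    filter_upwards [t1, t2] with y h1 h2
    exact ⟨(hup y).trans h1.le, h2.le.trans (hlow y)⟩
  rw [tendsto_order]
  constructor
  · intro a ha
    have hc : Tendsto (fun ε : ℝ => (1 - ε - M * ε) * Real.exp (-(2 * ε))) (𝓝[>] 0) (𝓝 1) := by
      have : Continuous (fun ε : ℝ => (1 - ε - M * ε) * Real.exp (-(2 * ε))) := by fun_prop
      have := (this.tendsto 0).mono_left (nhdsWithin_le_nhds (s := Set.Ioi 0))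
      simpa using this
    obtain ⟨ε, h1, h2⟩ := ((hc.eventually_const_lt ha).and (Ioo_mem_nhdsGT (zero_lt_one' ℝ))).exists
    filter_upwards [main ε h2.1 h2.2] with y hy
    refine h1.trans_le ?_
    rw [Real.exp_neg, ← div_eq_mul_inv, div_le_iff₀ (Real.exp_pos _)]
    linarith [hy.2]
  · intro a ha
    have hc : Tendsto (fun ε : ℝ => (1 + ε) * Real.exp (2 * ε) / (1 - ε)) (𝓝[>] 0) (𝓝 1) := by
      have : ContinuousAt (fun ε : ℝ => (1 + ε) * Real.exp (2 * ε) / (1 - ε)) 0 := by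
        refine ContinuousAt.div (by fun_prop) (by fun_prop) (by norm_num)
      have := this.tendsto.mono_left (nhdsWithin_le_nhds (s := Set.Ioi 0))
      simpa using this
    obtain ⟨ε, h1, h2⟩ := ((hc.eventually_lt_const ha).and (Ioo_mem_nhdsGT (zero_lt_one' ℝ))).exists
    filter_upwards [main ε h2.1 h2.2] with y hy
    refine lt_of_le_of_lt ?_ h1
    have := hy.1
    rw [le_div_iff₀ (by linarith [h2.2])]
    rw [Real.exp_neg] at this
    have he := Real.exp_pos (2 * ε)
    have h3 := mul_le_mul_of_nonneg_right this he.le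
    have h4 : φ y * (Real.exp (2 * ε))⁻¹ * (1 - ε) * Real.exp (2 * ε) = φ y * (1 - ε) := by
      field_simp
    linarith

end PartA3

section PartA4

open Filter Topology MeasureTheory

lemma WI_sinc_scaled (ε η : ℝ) (hε : 0 < ε) (hη : 0 < η) : ∃ (k : ℝ → ℂ) (K : ℝ → ℝ), Continuous k ∧
    HasCompactSupport k ∧ (∀ v, 0 ≤ K v) ∧ Integrable K ∧ ∫ v, K v = 1 ∧
      (1 - ε ≤ ∫ v in Set.Icc (-η) η, K v) ∧
      ∀ v : ℝ, ∫ t : ℝ, k t * Complex.exp (t * v * Complex.I) = (K v : ℂ) := by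
  set J : ℝ → ℝ := fun v => Real.sinc (v / 2) ^ 2 with hJ
  set c := ∫ v, J v with hc
  have hcp : 0 < c := WI_sinc_integral_pos
  have hJi : Integrable J := WI_sinc_integrable
  -- choose scale
  have hlim : Tendsto (fun R : ℝ => ∫ v in Set.Icc (-R) R, J v) atTop (𝓝 c) := by
    have := tendsto_setIntegral_of_monotone (μ := volume) (f := J) (s := fun x : ℝ => Set.Icc (-x) x)
      (fun x => measurableSet_Icc) (fun a b hab => Set.Icc_subset_Icc (neg_le_neg hab) hab) (by
            exact hJi.integrableOn)
    have e : (⋃ n : ℝ, Set.Icc (-n) n) = Set.univ := by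
      ext z; simp only [Set.mem_iUnion, Set.mem_univ, iff_true]; exact ⟨|z|, abs_le.mp le_rfl⟩
    rw [e] at this
    simpa using this
  have hlt : (1 - ε) * c < c := by nlinarith
  obtain ⟨R, hR1, hR0⟩ := ((hlim.eventually_const_lt hlt).and (eventually_gt_atTop 0)).exists
  set l := R / η with hl
  have hlp : 0 < l := div_pos hR0 hη
  refine ⟨fun t => (c⁻¹ : ℂ) * WItri (t / l), fun v => c⁻¹ * (l * J (l * v)), ?_, ?_, ?_, ?_, ?_, ?_, ?_⟩
  · have := WItri_cont
    fun_prop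
  · refine HasCompactSupport.intro (isCompact_Icc (a := -l) (b := l)) fun t ht => ?_
    rw [WItri_supp, mul_zero]
    intro h
    apply ht
    rw [Set.mem_Icc, le_div_iff₀ hlp, div_le_iff₀ hlp] at h
    exact ⟨by linarith [h.1], by linarith [h.2]⟩
  · intro v
    have : 0 ≤ J (l * v) := sq_nonneg _
    positivity
  · exact ((hJi.comp_mul_left' hlp.ne').const_mul l).const_mul c⁻¹
  · rw [integral_const_mul, integral_const_mul, Measure.integral_comp_mul_left]
    rw [abs_of_pos (inv_pos.mpr hlp), smul_eq_mul, ← mul_assoc l, mul_inv_cancel₀ hlp.ne', one_mul, ← hc,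
      inv_mul_cancel₀ hcp.ne']
  · rw [integral_const_mul, integral_const_mul, integral_Icc_eq_integral_Ioc,
      ← intervalIntegral.integral_of_le (by linarith), intervalIntegral.integral_comp_mul_left _ hlp.ne',
      smul_eq_mul, ← mul_assoc l, mul_inv_cancel₀ hlp.ne', one_mul, mul_neg]
    have : l * η = R := by rw [hl]; field_simp
    rw [this, intervalIntegral.integral_of_le (by linarith), ← integral_Icc_eq_integral_Ioc,
      inv_mul_eq_div, le_div_iff₀ hcp]
    exact hR1.le
  · intro v
    have h1 := WItri_fourier (l * v)
    have h2 := Measure.integral_comp_div (fun t : ℝ => WItri t * Complex.exp (t * (l * v : ℝ) * Complex.I)) l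
    rw [h1, abs_of_pos hlp] at h2
    have h3 : ∀ t : ℝ, (c⁻¹ : ℂ) * WItri (t / l) * Complex.exp (t * v * Complex.I) =
      (c⁻¹ : ℂ) * (WItri (t / l) * Complex.exp ((t / l : ℝ) * (l * v : ℝ) * Complex.I)) := by
      intro t
      rw [mul_assoc]
      have : (((t / l : ℝ) : ℂ) * (l * v : ℝ) * Complex.I) = t * v * Complex.I := by
        have : (l : ℂ) ≠ 0 := by exact_mod_cast hlp.ne'
        push_cast
        field_simp
      rw [this]
    simp_rw [h3]
    rw [integral_const_mul, h2]
    simp only [hJ, Complex.real_smul]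
    push_cast
    rfl

theorem wiener_ikehara (g : ℕ → ℝ) (hg : ∀ n, 0 ≤ g n) (C : ℝ)
    (hC : ∀ N : ℕ, ∑ n ∈ Finset.Icc 1 N, g n ≤ C * N) (H : ℂ → ℂ)
    (hH : ContinuousOn H {s | 1 ≤ s.re})
    (hGH : ∀ s : ℂ, 1 < s.re → LSeries (fun n => (g n : ℂ)) s = 1 / (s - 1) + H s) :
    Tendsto (fun N : ℕ => (∑ n ∈ Finset.Icc 1 N, g n) / N) atTop (𝓝 1) := by
  set S : ℝ → ℝ := fun x => ∑ n ∈ Finset.Icc 1 ⌊x⌋₊, g n with hS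
  have hSm : Monotone S := by
    intro x y hxy
    refine Finset.sum_le_sum_of_subset_of_nonneg ?_ fun i _ _ => hg i
    exact Finset.Icc_subset_Icc_right (Nat.floor_mono hxy)
  have hS0 : ∀ x, 0 ≤ S x := fun x => Finset.sum_nonneg fun i _ => hg i
  have hC0 : 0 ≤ C := by
    have := (Finset.sum_nonneg (fun i _ => hg i)).trans (hC 1)
    simpa using this
  have hSC : ∀ x, 0 ≤ x → S x ≤ C * x := fun x hx =>
    (hC _).trans (mul_le_mul_of_nonneg_left (Nat.floor_le hx) hC0)
  set φ : ℝ → ℝ := fun u => S (Real.exp u) * Real.exp (-u) with hφ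
  have hφm : Measurable φ := by
    have : Measurable (fun u => S (Real.exp u)) := (hSm.comp Real.exp_monotone).measurable
    fun_prop
  have hφ0 : ∀ u, 0 ≤ φ u := fun u => mul_nonneg (hS0 _) (Real.exp_pos _).le
  have hφC : ∀ u, φ u ≤ C := by
    intro u
    have := mul_le_mul_of_nonneg_right (hSC _ (Real.exp_pos u).le) (Real.exp_pos (-u)).le
    rwa [mul_assoc, ← Real.exp_add, add_neg_cancel, Real.exp_zero, mul_one] at this
  have hφe : ∀ u, φ u * Real.exp u = S (Real.exp u) := by
    intro u
    simp only [hφ]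
    rw [mul_assoc, ← Real.exp_add, neg_add_cancel, Real.exp_zero, mul_one]
  set B : ℝ → ℝ := fun u => Set.indicator (Set.Ioi 0) (fun u => φ u - 1) u with hB
  have hφneg : ∀ u, u < 0 → φ u = 0 := by
    intro u hu
    have : ⌊Real.exp u⌋₊ = 0 := Nat.floor_eq_zero.mpr (by simpa using hu)
    simp [hφ, hS, this]
  -- transform
  have hBh : ∀ δ : ℝ, 0 < δ → ∀ t : ℝ,
      ∫ u : ℝ, (B u : ℂ) * Complex.exp (-((δ : ℂ) + t * Complex.I) * u) =
      (fun z : ℂ => (H (1 + z) - 1) / (1 + z)) (δ + t * Complex.I) := by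
    intro δ hδ t
    set z : ℂ := δ + t * Complex.I with hz
    have hzre : z.re = δ := by simp [hz]
    have hz0 : z ≠ 0 := by intro h; rw [h] at hzre; simp at hzre; linarith
    have hz1 : 1 + z ≠ 0 := by
      intro h
      have := congrArg Complex.re h
      rw [Complex.add_re, hzre] at this; simp at this; linarith
    have hs : 1 < (1 + z).re := by rw [Complex.add_re, hzre]; simpa using hδ
    have hO : (fun n : ℕ ↦ ∑ k ∈ Finset.Icc 1 n, g k) =O[atTop] fun n : ℕ ↦ (n : ℝ) ^ (1:ℝ) := by
      refine Asymptotics.IsBigO.of_bound C (Eventually.of_forall fun n => ?_)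
      rw [Real.norm_eq_abs, abs_of_nonneg (Finset.sum_nonneg fun i _ => hg i)]
      simpa using hC n
    have hL := LSeries_eq_mul_integral_of_nonneg g zero_le_one hs hO hg
    rw [hGH _ hs] at hL
    have hcv := integral_comp_exp_Ioi (fun x : ℝ => ((S x : ℂ)) * (x : ℂ) ^ (-((1 + z) + 1))) 0
    have e1 : ∫ u in Set.Ioi (0:ℝ), (φ u : ℂ) * Complex.exp (-z * u) = (1 / z + H (1 + z)) / (1 + z) := by
      rw [eq_div_iff hz1, mul_comm]
      rw [show (1 + z - 1) = z by ring] at hL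
      rw [hL]
      congr 1
      have : ∀ x : ℝ, (∑ k ∈ Finset.Icc 1 ⌊x⌋₊, (g k : ℂ)) = (S x : ℂ) := by
        intro x; simp [hS]
      simp_rw [this]
      rw [← Real.exp_zero, ← hcv]
      refine setIntegral_congr_fun (by simp) fun u _ => ?_
      simp only [hφ]
      rw [Complex.real_smul, Complex.ofReal_mul, Complex.cpow_def_of_ne_zero (by
        exact_mod_cast (Real.exp_pos u).ne'), ← Complex.ofReal_log (Real.exp_pos u).le, Real.log_exp]
      rw [Complex.ofReal_exp, Complex.ofReal_exp, mul_assoc, mul_left_comm (Complex.exp (u : ℂ)), ← Complex.exp_add,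
        ← Complex.exp_add]
      congr 2
      push_cast
      ring
    have hzi : IntegrableOn (fun u : ℝ => Complex.exp (-z * u)) (Set.Ioi 0) :=
      integrableOn_exp_mul_complex_Ioi (by simp [hzre, hδ]) 0
    have e2 : ∫ u in Set.Ioi (0:ℝ), Complex.exp (-z * u) = 1 / z := by
      rw [integral_exp_mul_complex_Ioi (by simp [hzre, hδ])]
      simp
    have hφi : IntegrableOn (fun u : ℝ => (φ u : ℂ) * Complex.exp (-z * u)) (Set.Ioi 0) := by
      refine Integrable.mono' (hzi.norm.const_mul C) (by fun_prop) (ae_of_all _ fun u => ?_)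
      rw [norm_mul, Complex.norm_real, Real.norm_eq_abs, abs_of_nonneg (hφ0 u)]
      exact mul_le_mul_of_nonneg_right (hφC u) (norm_nonneg _)
    have e3 : ∫ u : ℝ, (B u : ℂ) * Complex.exp (-z * u) =
        ∫ u in Set.Ioi (0:ℝ), ((φ u : ℂ) * Complex.exp (-z * u) - Complex.exp (-z * u)) := by
      rw [← integral_indicator measurableSet_Ioi]
      congr 1
      ext u
      by_cases hu : 0 < u
      · simp [hB, Set.indicator, hu]; ring
      · simp [hB, Set.indicator, hu]
    rw [e3, integral_sub hφi hzi, e1, e2]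
    field_simp
    ring
  have hBm : Measurable B := (hφm.sub_const 1).indicator measurableSet_Ioi
  have hBM : ∀ u, |B u| ≤ C + 1 := by
    intro u
    by_cases hu : 0 < u
    · simp only [hB, Set.indicator, Set.mem_Ioi, hu, if_true]
      rw [abs_le]
      constructor <;> linarith [hφ0 u, hφC u]
    · simp only [hB, Set.indicator, Set.mem_Ioi, hu, if_false, abs_zero]
      linarith
  have hB0 : ∀ u, u ≤ 0 → B u = 0 := by
    intro u hu
    simp [hB, Set.indicator, hu.not_gt]
  have hh : ContinuousOn (fun z : ℂ => (H (1 + z) - 1) / (1 + z)) {s | 0 ≤ s.re} := by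
    refine ContinuousOn.div ?_ (by fun_prop) ?_
    · refine ContinuousOn.sub ?_ continuousOn_const
      refine hH.comp (by fun_prop) fun z hz => ?_
      simpa using hz
    · intro z hz h
      have := congrArg Complex.re h
      simp at this hz
      linarith
  have hφlim : Tendsto φ atTop (𝓝 1) := by
    refine WI_tauber φ hφm C hφ0 hφC (fun u w huw => ?_) fun ε hε η hη => ?_
    · rw [hφe, hφe]
      exact hSm (Real.exp_monotone huw)
    · obtain ⟨k, K, hk, hkc, K0, Ki, K1, Kc, hkK⟩ := WI_sinc_scaled ε η hε hη
      refine ⟨K, K0, Ki, K1, Kc, ?_⟩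
      refine (WI_kernel_limit B hBm _ hBM hB0 _ hh hBh k hk hkc K Ki hkK).congr fun x => ?_
      refine integral_congr_ae ?_
      have : ∀ᵐ u : ℝ, u ≠ 0 := by simp [ae_iff]
      filter_upwards [this] with u hu
      congr 1
      rcases lt_or_gt_of_ne hu with h | h
      · simp [hB, Set.indicator, h.le.not_gt, hφneg u h]
      · simp [hB, Set.indicator, h]
  have hcomp := hφlim.comp (Real.tendsto_log_atTop.comp tendsto_natCast_atTop_atTop)
  refine hcomp.congr' ?_
  filter_upwards [eventually_gt_atTop 0] with N hN
  have hNp : (0:ℝ) < N := by exact_mod_cast hN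
  simp only [Function.comp, hφ, hS]
  rw [Real.exp_neg, Real.exp_log hNp, Nat.floor_natCast]
  rfl

end PartA4

section PartB

open Filter Topology

section Jacobsthal
variable (p : ℕ) [Fact p.Prime]

/-- Jacobsthal sum. -/
noncomputable def jac (k : ZMod p) : ℤ := ∑ x : ZMod p, quadraticChar (ZMod p) (x ^ 3 + k * x)

variable {p}

lemma jac_char (hp2 : p ≠ 2) : ringChar (ZMod p) ≠ 2 := by
  rwa [ZMod.ringChar_zmod_n]

lemma jac_sum_char (hp2 : p ≠ 2) : ∑ x : ZMod p, quadraticChar (ZMod p) x = 0 :=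
  quadraticChar_sum_zero (jac_char hp2)

lemma qc_sq_mul {m : ZMod p} (hm : m ≠ 0) (x : ZMod p) :
    quadraticChar (ZMod p) (m ^ 2 * x) = quadraticChar (ZMod p) x := by
  rw [map_mul, map_pow, quadraticChar_sq_one hm, one_mul]

lemma jac_twist {m : ZMod p} (hm : m ≠ 0) (k : ZMod p) :
    jac p (m ^ 2 * k) = quadraticChar (ZMod p) m * jac p k := by
  unfold jac
  rw [Finset.mul_sum, ← Equiv.sum_comp (Equiv.mulLeft₀ m hm)]
  refine Finset.sum_congr rfl fun x _ => ?_
  change quadraticChar (ZMod p) ((m * x) ^ 3 + m ^ 2 * k * (m * x)) = _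
  rw [← map_mul, ← qc_sq_mul hm (m * _)]
  congr 1; ring

lemma jac_zero (hp2 : p ≠ 2) : jac p 0 = 0 := by
  unfold jac
  rw [← jac_sum_char hp2]
  refine Finset.sum_congr rfl fun x _ => ?_
  rcases eq_or_ne x 0 with rfl | hx
  · simp
  · rw [show x ^ 3 + 0 * x = x ^ 2 * x by ring, qc_sq_mul hx]

lemma jac_sq_sum (u v : ZMod p) (hp2 : p ≠ 2) :
    ∑ k : ZMod p, quadraticChar (ZMod p) ((u + k) * (v + k)) = if u = v then (p : ℤ) - 1 else -1 := by
  classical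
  have hcard : (Finset.univ : Finset (ZMod p)).card = p := by simp [ZMod.card]
  split_ifs with h
  · subst h
    rw [← (Equiv.subLeft (-u)).sum_comp]
    have : ∀ x : ZMod p, quadraticChar (ZMod p) ((u + Equiv.subLeft (-u) x) * (u + Equiv.subLeft (-u) x))
        = 1 - if x = 0 then 1 else 0 := by
      intro x
      simp only [Equiv.subLeft_apply]
      split_ifs with hx
      · subst hx; simp
      · rw [show (u + (-u - x)) * (u + (-u - x)) = x ^ 2 * 1 by ring, qc_sq_mul hx]; simp
    simp_rw [this]
    rw [Finset.sum_sub_distrib]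
    simp [ZMod.card]
  · have hw : v - u ≠ 0 := sub_ne_zero.mpr (Ne.symm h)
    rw [← (Equiv.subRight u).sum_comp]
    have e0 : ∀ x : ZMod p, quadraticChar (ZMod p) ((u + Equiv.subRight u x) * (v + Equiv.subRight u x))
        = quadraticChar (ZMod p) (x * (x + (v - u))) := by
      intro x; congr 1; simp only [Equiv.subRight_apply]; ring
    simp_rw [e0]
    have e1 : ∀ x : ZMod p, quadraticChar (ZMod p) (x * (x + (v - u))) =
        quadraticChar (ZMod p) (1 + (v - u) * x⁻¹) - if x = 0 then 1 else 0 := by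
      intro x
      split_ifs with hx
      · subst hx; simp
      · rw [← qc_sq_mul hx (1 + _), sub_zero]
        congr 1; field_simp
    simp_rw [e1]
    rw [Finset.sum_sub_distrib]
    have e2 : ∑ x : ZMod p, quadraticChar (ZMod p) (1 + (v - u) * x⁻¹) = 0 := by
      rw [← jac_sum_char hp2]
      exact ((Equiv.inv (ZMod p)).trans ((Equiv.mulLeft₀ _ hw).trans (Equiv.addLeft 1))).sum_comp
        (fun y => quadraticChar (ZMod p) y)
    rw [e2]; simp

lemma qc_neg_one (h1 : p % 4 = 1) : quadraticChar (ZMod p) (-1) = 1 := by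
  have : IsSquare (-1 : ZMod p) := by
    rw [ZMod.exists_sq_eq_neg_one_iff]; omega
  exact (quadraticChar_one_iff_isSquare (by simp)).mpr this

lemma jac_sum_sq (h1 : p % 4 = 1) : ∑ k : ZMod p, jac p k ^ 2 = 2 * p * ((p : ℤ) - 1) := by
  classical
  have hp2 : p ≠ 2 := by rintro rfl; omega
  have e1 : ∀ k : ZMod p, jac p k ^ 2 = ∑ x : ZMod p, ∑ y : ZMod p,
      quadraticChar (ZMod p) (x * y) * quadraticChar (ZMod p) ((x ^ 2 + k) * (y ^ 2 + k)) := by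
    intro k
    unfold jac
    rw [sq, Finset.sum_mul_sum]
    refine Finset.sum_congr rfl fun x _ => Finset.sum_congr rfl fun y _ => ?_
    rw [← map_mul, ← map_mul]; congr 1; ring
  simp_rw [e1]
  rw [Finset.sum_comm]
  simp_rw [Finset.sum_comm (s := (Finset.univ : Finset (ZMod p))) (t := (Finset.univ : Finset (ZMod p)))
    (f := fun k y => quadraticChar (ZMod p) (_ * y) * quadraticChar (ZMod p) ((_ ^ 2 + k) * (y ^ 2 + k)))]
  simp_rw [← Finset.mul_sum, jac_sq_sum _ _ hp2]
  have e2 : ∀ x y : ZMod p, quadraticChar (ZMod p) (x * y) * (if x ^ 2 = y ^ 2 then (p : ℤ) - 1 else -1)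
      = p * (if x ^ 2 = y ^ 2 then quadraticChar (ZMod p) (x * y) else 0) -
        quadraticChar (ZMod p) x * quadraticChar (ZMod p) y := by
    intro x y
    rw [← map_mul]
    split_ifs <;> ring
  simp_rw [e2, Finset.sum_sub_distrib, ← Finset.mul_sum, jac_sum_char hp2, mul_zero, Finset.sum_const_zero, sub_zero]
  have e3 : ∀ x : ZMod p, ∑ y : ZMod p, (if x ^ 2 = y ^ 2 then quadraticChar (ZMod p) (x * y) else 0) =
      2 - if x = 0 then 2 else 0 := by
    intro x
    split_ifs with hx
    · subst hx
      refine Finset.sum_eq_zero fun y _ => ?_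
      simp
    · have hne : x ≠ -x := by
        intro h
        have h2 : (2 : ZMod p) * x = 0 := by linear_combination h
        rcases mul_eq_zero.mp h2 with h3 | h3
        · have : (2:ZMod p) ≠ 0 := Ring.two_ne_zero (jac_char hp2)
          exact this h3
        · exact hx h3
      have : ∀ y : ZMod p, (if x ^ 2 = y ^ 2 then quadraticChar (ZMod p) (x * y) else 0) =
          (if y = x then 1 else 0) + (if y = -x then 1 else 0) := by
        intro y
        by_cases hy : y = x
        · subst hy
          rw [if_pos rfl, if_pos rfl, if_neg hne, show y * y = y ^ 2 * 1 by ring, qc_sq_mul hx]; simp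
        · by_cases hy' : y = -x
          · subst hy'
            rw [if_pos (by ring), if_neg hy, if_pos rfl, show x * -x = x ^ 2 * (-1) by ring, qc_sq_mul hx,
              qc_neg_one h1]; simp
          · rw [if_neg, if_neg hy, if_neg hy']; · simp
            intro h
            rcases sq_eq_sq_iff_eq_or_eq_neg.mp h with h | h
            · exact hy h.symm
            · exact hy' (by rw [h]; simp)
      simp_rw [this, Finset.sum_add_distrib]
      simp
  simp_rw [e3]
  rw [Finset.sum_sub_distrib]
  simp [ZMod.card]
  ring

lemma jac_four_p (h1 : p % 4 = 1) : ∃ n : ZMod p, jac p 1 ^ 2 + jac p n ^ 2 = 4 * p := by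
  classical
  have hp2 : p ≠ 2 := by rintro rfl; omega
  obtain ⟨n, hn⟩ := quadraticChar_exists_neg_one (jac_char hp2)
  refine ⟨n, ?_⟩
  have hn0 : n ≠ 0 := by rintro rfl; simp at hn
  have key : ∀ k : ZMod p, 2 * jac p k ^ 2 =
      (jac p 1 ^ 2 + jac p n ^ 2) * (1 - if k = 0 then 1 else 0) +
      quadraticChar (ZMod p) k * (jac p 1 ^ 2 - jac p n ^ 2) := by
    intro k
    split_ifs with hk
    · subst hk; rw [jac_zero hp2]; simp
    · rcases quadraticChar_dichotomy hk with h | h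
      · obtain ⟨m, hm⟩ := (quadraticChar_one_iff_isSquare hk).mp h
        have hm0 : m ≠ 0 := by rintro rfl; simp at hm; exact hk hm
        have : jac p k = quadraticChar (ZMod p) m * jac p 1 := by
          rw [← jac_twist hm0]; congr 1; rw [hm]; ring
        rw [this, mul_pow, quadraticChar_sq_one hm0, h]; ring
      · have hkn : quadraticChar (ZMod p) (k * n) = 1 := by rw [map_mul, h, hn]; norm_num
        obtain ⟨m, hm⟩ := (quadraticChar_one_iff_isSquare (mul_ne_zero hk hn0)).mp hkn
        have hm0 : m / n ≠ 0 := by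
          apply div_ne_zero _ hn0
          rintro rfl; simp at hm; tauto
        have : jac p k = quadraticChar (ZMod p) (m / n) * jac p n := by
          rw [← jac_twist hm0]; congr 1
          have : k * n = m * m := hm
          field_simp
          linear_combination this
        rw [this, mul_pow, quadraticChar_sq_one hm0, h]; ring
  have hs := Finset.sum_congr (s₁ := (Finset.univ : Finset (ZMod p))) rfl fun k _ => key k
  rw [← Finset.mul_sum, jac_sum_sq h1, Finset.sum_add_distrib, ← Finset.mul_sum, ← Finset.sum_mul,
    jac_sum_char hp2, Finset.sum_sub_distrib] at hs
  simp [ZMod.card] at hs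
  have hp1 : (p : ℤ) - 1 ≠ 0 := by
    have := (Fact.out : p.Prime).one_lt
    have : (1:ℤ) < p := by exact_mod_cast this
    linarith
  apply mul_right_cancel₀ hp1
  linarith

lemma jac_mod_four (h1 : p % 4 = 1) : jac p 1 % 4 = 2 := by
  classical
  have hp2 : p ≠ 2 := by rintro rfl; omega
  have two0 : (2:ZMod p) ≠ 0 := Ring.two_ne_zero (jac_char hp2)
  obtain ⟨i, hi⟩ : IsSquare (-1 : ZMod p) := by
    rw [ZMod.exists_sq_eq_neg_one_iff]; omega
  have hi0 : i ≠ 0 := by rintro rfl; simp at hi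
  have hine : i ≠ -i := by
    intro h
    have h2 : (2 : ZMod p) * i = 0 := by linear_combination h
    rcases mul_eq_zero.mp h2 with h3 | h3
    · exact two0 h3
    · exact hi0 h3
  set s := Finset.univ.filter fun x : ZMod p => quadraticChar (ZMod p) (x ^ 3 + 1 * x) = -1 with hs
  set z := Finset.univ.filter fun x : ZMod p => x ^ 3 + 1 * x = 0 with hz
  have e1 : jac p 1 = p - z.card - 2 * s.card := by
    unfold jac
    have : ∀ x : ZMod p, quadraticChar (ZMod p) (x ^ 3 + 1 * x) =
        1 - (if x ^ 3 + 1 * x = 0 then 1 else 0) - 2 * (if quadraticChar (ZMod p) (x ^ 3 + 1 * x) = -1 then 1 else 0) := by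
      intro x
      by_cases h0 : x ^ 3 + 1 * x = 0
      · rw [h0]; simp
      · rcases quadraticChar_dichotomy h0 with h | h
        · rw [h, if_neg h0]; norm_num
        · rw [h, if_neg h0]; norm_num
    rw [Finset.sum_congr rfl fun x _ => this x, Finset.sum_sub_distrib, Finset.sum_sub_distrib,
      ← Finset.mul_sum, Finset.sum_boole, Finset.sum_boole]
    simp [ZMod.card, hs, hz]
  have hzc : z.card = 3 := by
    have : z = {0, i, -i} := by
      ext x
      simp only [hz, Finset.mem_filter, Finset.mem_univ, true_and, Finset.mem_insert, Finset.mem_singleton]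
      have hf : x ^ 3 + 1 * x = x * ((x - i) * (x + i)) := by linear_combination (-x) * hi
      rw [hf, mul_eq_zero, mul_eq_zero, sub_eq_zero, add_eq_zero_iff_eq_neg]
    rw [this]
    rw [Finset.card_insert_of_notMem, Finset.card_insert_of_notMem, Finset.card_singleton]
    · simpa using hine
    · simp [hi0, Ne.symm hi0]
  have hsc : Even s.card := by
    have h2 : ∑ x ∈ s, (1 : ZMod 2) = 0 := by
      refine Finset.sum_involution (fun x _ => -x) (fun _ _ => by decide) ?_ ?_ ?_
      · intro x hx _ h
        have h2 : (2 : ZMod p) * x = 0 := by linear_combination -h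
        rcases mul_eq_zero.mp h2 with h3 | h3
        · exact two0 h3
        · subst h3; simp [hs] at hx
      · intro x hx
        simp only [hs, Finset.mem_filter, Finset.mem_univ, true_and] at hx ⊢
        rw [← hx, show (-x) ^ 3 + 1 * -x = -1 * (x ^ 3 + 1 * x) by ring, map_mul, qc_neg_one h1, one_mul]
      · intro x _; simp
    rw [Finset.sum_const, nsmul_eq_mul, mul_one] at h2
    rw [← ZMod.natCast_eq_zero_iff_even]; exact h2
  obtain ⟨r, hr⟩ := hsc
  rw [e1, hzc]
  omega

lemma jac_three (h3 : p % 4 = 3) : jac p 1 = 0 := by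
  have hp2 : p ≠ 2 := by rintro rfl; omega
  have hq : quadraticChar (ZMod p) (-1) = -1 := by
    rw [quadraticChar_neg_one_iff_not_isSquare, ZMod.exists_sq_eq_neg_one_iff]; omega
  have : jac p 1 = - jac p 1 := by
    have h := Equiv.sum_comp (Equiv.neg (ZMod p)) (fun x => quadraticChar (ZMod p) (x ^ 3 + 1 * x))
    unfold jac
    rw [← Finset.sum_neg_distrib, ← h]
    refine Finset.sum_congr rfl fun x _ => ?_
    simp only [Equiv.neg_apply]
    rw [show (-x) ^ 3 + 1 * -x = -1 * (x ^ 3 + 1 * x) by ring, map_mul, hq]; ring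
  linarith

lemma nagao_eq (hp2 : p ≠ 2) : -(nagaoAverage p) = (jac p 1 : ℝ) ^ 2 / p := by
  classical
  have hcount : ∀ c : ZMod p, (Nat.card {xy : ZMod p × ZMod p // xy.2 ^ 2 = xy.1 ^ 3 + c * xy.1} : ℤ) =
      p + jac p c := by
    intro c
    rw [Nat.card_eq_fintype_card, Fintype.card_subtype]
    have : (Finset.univ.filter fun xy : ZMod p × ZMod p => xy.2 ^ 2 = xy.1 ^ 3 + c * xy.1).card =
        ∑ x : ZMod p, (Finset.univ.filter fun y : ZMod p => y ^ 2 = x ^ 3 + c * x).card := by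
      simp_rw [Finset.card_filter]
      rw [← Finset.univ_product_univ, Finset.sum_product]
    rw [this]
    push_cast
    have h2 : ∀ x : ZMod p, ((Finset.univ.filter fun y : ZMod p => y ^ 2 = x ^ 3 + c * x).card : ℤ) =
        quadraticChar (ZMod p) (x ^ 3 + c * x) + 1 := by
      intro x
      rw [← quadraticChar_card_sqrts (jac_char hp2)]
      congr 2
      ext y; simp
    simp_rw [h2, Finset.sum_add_distrib]
    simp [jac, ZMod.card, add_comm]
  have hfib : ∀ t : ZMod p, ((p : ℝ) - (Nat.card {xy : ZMod p × ZMod p //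
      xy.2 ^ 2 = xy.1 ^ 3 + (t ^ 3 + t) ^ 2 * xy.1} : ℝ)) =
      ((-(quadraticChar (ZMod p) (t ^ 3 + 1 * t) * jac p 1) : ℤ) : ℝ) := by
    intro t
    have h := hcount ((t ^ 3 + t) ^ 2)
    have h' : (Nat.card {xy : ZMod p × ZMod p // xy.2 ^ 2 = xy.1 ^ 3 + (t ^ 3 + t) ^ 2 * xy.1} : ℝ) =
      ((p + jac p ((t ^ 3 + t) ^ 2) : ℤ) : ℝ) := by exact_mod_cast congrArg (Int.cast (R := ℝ)) h
    rw [h']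
    have : jac p ((t ^ 3 + t) ^ 2) = quadraticChar (ZMod p) (t ^ 3 + 1 * t) * jac p 1 := by
      rw [one_mul]
      rcases eq_or_ne (t ^ 3 + t) 0 with h0 | h0
      · rw [h0]; simp [jac_zero hp2]
      · rw [← jac_twist h0, mul_one]
    rw [this]; push_cast; ring
  unfold nagaoAverage
  rw [finsum_eq_sum_of_fintype]
  simp_rw [hfib]
  rw [← Int.cast_sum, Finset.sum_neg_distrib, ← Finset.sum_mul]
  have : ∑ t : ZMod p, quadraticChar (ZMod p) (t ^ 3 + 1 * t) = jac p 1 := rfl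
  rw [this]
  push_cast
  ring

lemma jac_one_mod_four (h1 : p % 4 = 1) : ∃ a b : ℤ, jac p 1 = 2 * a ∧ a % 2 = 1 ∧ (p : ℤ) = a ^ 2 + b ^ 2 := by
  obtain ⟨n, hn⟩ := jac_four_p h1
  have h4 := jac_mod_four h1
  obtain ⟨a, ha⟩ : ∃ a, jac p 1 = 2 * a := ⟨jac p 1 / 2, by omega⟩
  have hev : Even (jac p n) := by
    have : Even (jac p n ^ 2) := by
      have : jac p n ^ 2 = 2 * (2 * p - 2 * a ^ 2) := by rw [ha] at hn; linarith
      rw [this]; exact even_two_mul _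
    exact (Int.even_pow.mp this).1
  obtain ⟨b, hb⟩ := hev
  refine ⟨a, b, ha, by omega, ?_⟩
  rw [ha, hb] at hn
  nlinarith
end Jacobsthal

end PartB

section PartC1

open Filter Topology

lemma lat_summable {k : ℝ} (hk : 2 < k) : Summable fun v : ℤ × ℤ => ‖v‖ ^ (-k) := by
  rw [← (finTwoArrowEquiv ℤ).summable_iff]
  refine (EisensteinSeries.summable_one_div_norm_rpow hk).congr fun v => ?_
  simp only [Function.comp, finTwoArrowEquiv_apply]
  congr 1
  refine le_antisymm ?_ ?_
  · rw [pi_norm_le_iff_of_nonneg (norm_nonneg _)]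
    intro i
    fin_cases i
    · exact norm_fst_le (v 0, v 1)
    · exact norm_snd_le (v 0, v 1)
  · exact norm_prod_le_iff.mpr ⟨norm_le_pi_norm v 0, norm_le_pi_norm v 1⟩

/-- The summand. -/
noncomputable def hf (s : ℂ) (x y : ℝ) : ℂ :=
  ((x ^ 2 - y ^ 2 : ℝ) : ℂ) * ((x ^ 2 + y ^ 2 : ℝ) : ℂ) ^ (-s - 1)

/-- Difference of two neighbouring summands. -/
noncomputable def hD (s : ℂ) (v : ℤ × ℤ) : ℂ :=
  hf s (2 * v.1 + 1) (2 * v.2) - hf s (2 * v.1) (2 * v.2 + 1)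

lemma hf_hasDeriv (s : ℂ) (a b t : ℝ) (hN : 0 < (a - t) ^ 2 + (b + t) ^ 2) :
    HasDerivAt (fun t : ℝ => hf s (a - t) (b + t))
      (((-2 * (a - t) - 2 * (b + t) : ℝ) : ℂ) * (((a - t) ^ 2 + (b + t) ^ 2 : ℝ) : ℂ) ^ (-s - 1) +
       (((a - t) ^ 2 - (b + t) ^ 2 : ℝ) : ℂ) * ((-s - 1) * (((a - t) ^ 2 + (b + t) ^ 2 : ℝ) : ℂ) ^ (-s - 1 - 1)
         * ((-2 * (a - t) + 2 * (b + t) : ℝ) : ℂ))) t := by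
  have h1 : HasDerivAt (fun t : ℝ => (a - t) ^ 2) (-2 * (a - t)) t := by
    have := ((hasDerivAt_id t).const_sub a).pow 2
    convert! this using 1; simp
  have h2 : HasDerivAt (fun t : ℝ => (b + t) ^ 2) (2 * (b + t)) t := by
    have := ((hasDerivAt_id t).const_add b).pow 2
    convert! this using 1; simp
  have h3 := (h1.sub h2).ofReal_comp
  have h4 := (h1.add h2).ofReal_comp
  have h5 : HasDerivAt (fun z : ℂ => z ^ (-s - 1))
      ((-s - 1) * (((a - t) ^ 2 + (b + t) ^ 2 : ℝ) : ℂ) ^ (-s - 1 - 1) * 1)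
      (((a - t) ^ 2 + (b + t) ^ 2 : ℝ) : ℂ) :=
    (hasDerivAt_id _).cpow_const (Or.inl (by simpa using hN))
  have h6 := HasDerivAt.comp t h5 h4
  have h7 := h3.mul h6
  convert! h7 using 1
  simp

lemma hf_deriv_bound (s : ℂ) (R : ℝ) (hs : 3 / 4 < s.re) (hR : ‖s‖ < R) (x y M : ℝ) (hM : 1 / 2 ≤ M)
    (hxy : M ≤ x ^ 2 + y ^ 2) :
    ‖((-2 * x - 2 * y : ℝ) : ℂ) * ((x ^ 2 + y ^ 2 : ℝ) : ℂ) ^ (-s - 1) +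
       ((x ^ 2 - y ^ 2 : ℝ) : ℂ) * ((-s - 1) * ((x ^ 2 + y ^ 2 : ℝ) : ℂ) ^ (-s - 1 - 1)
         * ((-2 * x + 2 * y : ℝ) : ℂ))‖ ≤ (4 * (R + 2) * 2 ^ R) * M ^ (-(5 / 4) : ℝ) := by
  set N := x ^ 2 + y ^ 2 with hN
  have hN0 : 0 < N := by linarith
  have hre : s.re ≤ R := (Complex.re_le_norm s).trans hR.le
  have e1 : ‖(N : ℂ) ^ (-s - 1)‖ = N ^ (-s.re - 1) := by
    rw [Complex.norm_cpow_eq_rpow_re_of_pos hN0]; simp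
  have e2 : ‖(N : ℂ) ^ (-s - 1 - 1)‖ = N ^ (-s.re - 2) := by
    rw [Complex.norm_cpow_eq_rpow_re_of_pos hN0]; congr 1; simp; ring
  have e3 : |x ^ 2 - y ^ 2| ≤ N := by
    rw [abs_le]; constructor <;> nlinarith [sq_nonneg x, sq_nonneg y]
  have e4 : |-2 * x - 2 * y| ≤ 4 * N ^ (1 / 2 : ℝ) := by
    rw [← Real.sqrt_eq_rpow]
    apply abs_le_of_sq_le_sq _ (by positivity)
    rw [mul_pow, Real.sq_sqrt hN0.le]; nlinarith [sq_nonneg (x - y), sq_nonneg (x+y)]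
  have e5 : |-2 * x + 2 * y| ≤ 4 * N ^ (1 / 2 : ℝ) := by
    rw [← Real.sqrt_eq_rpow]
    apply abs_le_of_sq_le_sq _ (by positivity)
    rw [mul_pow, Real.sq_sqrt hN0.le]; nlinarith [sq_nonneg (x - y), sq_nonneg (x+y)]
  have e6 : ‖-s - 1‖ ≤ R + 1 := by
    calc ‖-s - 1‖ ≤ ‖-s‖ + ‖(1:ℂ)‖ := norm_sub_le _ _
      _ ≤ R + 1 := by rw [norm_neg, norm_one]; linarith
  have e7 : N ^ (-s.re - 1 / 2) ≤ 2 ^ R * M ^ (-(5/4) : ℝ) := by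
    have h1 : N ^ (-s.re - 1 / 2) = N ^ (-(s.re - 3/4)) * N ^ (-(5/4) : ℝ) := by
      rw [← Real.rpow_add hN0]; congr 1; ring
    have h2 : N ^ (-(5/4) : ℝ) ≤ M ^ (-(5/4) : ℝ) :=
      Real.rpow_le_rpow_of_nonpos (by linarith) hxy (by norm_num)
    have h3 : N ^ (-(s.re - 3/4)) ≤ 2 ^ R := by
      calc N ^ (-(s.re - 3/4)) ≤ (1/2 : ℝ) ^ (-(s.re - 3/4)) :=
            Real.rpow_le_rpow_of_nonpos (by norm_num) (by linarith) (by linarith)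
        _ = 2 ^ (s.re - 3/4) := by
            rw [one_div, Real.inv_rpow (by norm_num), ← Real.rpow_neg (by norm_num), neg_neg]
        _ ≤ 2 ^ R := Real.rpow_le_rpow_of_exponent_le (by norm_num) (by linarith)
    rw [h1]
    gcongr
  have e8 : N ^ (1 / 2 : ℝ) * N ^ (-s.re - 1) = N ^ (-s.re - 1 / 2) := by
    rw [← Real.rpow_add hN0]; congr 1; ring
  have e9 : N * (N ^ (1 / 2 : ℝ) * N ^ (-s.re - 2)) = N ^ (-s.re - 1 / 2) := by
    nth_rw 1 [← Real.rpow_one N]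
    rw [← Real.rpow_add hN0, ← Real.rpow_add hN0]; congr 1; ring
  calc _ ≤ ‖((-2 * x - 2 * y : ℝ) : ℂ) * (N : ℂ) ^ (-s - 1)‖ + ‖((x ^ 2 - y ^ 2 : ℝ) : ℂ) * ((-s - 1) * (N : ℂ) ^ (-s - 1 - 1)
         * ((-2 * x + 2 * y : ℝ) : ℂ))‖ := norm_add_le _ _
    _ = |-2 * x - 2 * y| * N ^ (-s.re - 1) + |x ^ 2 - y ^ 2| * (‖-s - 1‖ * N ^ (-s.re - 2) * |-2 * x + 2 * y|) := by
        rw [norm_mul, norm_mul, norm_mul, norm_mul, e1, e2, Complex.norm_real, Complex.norm_real, Complex.norm_real]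
        rfl
    _ ≤ (4 * N ^ (1 / 2 : ℝ)) * N ^ (-s.re - 1) + N * ((R + 1) * N ^ (-s.re - 2) * (4 * N ^ (1 / 2 : ℝ))) := by
        have : 0 ≤ R + 1 := (norm_nonneg _).trans e6
        gcongr
    _ = 4 * (N ^ (1 / 2 : ℝ) * N ^ (-s.re - 1)) + 4 * (R + 1) * (N * (N ^ (1 / 2 : ℝ) * N ^ (-s.re - 2))) := by ring
    _ = 4 * (R + 2) * N ^ (-s.re - 1 / 2) := by rw [e8, e9]; ring
    _ ≤ 4 * (R + 2) * (2 ^ R * M ^ (-(5 / 4) : ℝ)) := by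
        have : 0 ≤ R + 1 := (norm_nonneg _).trans e6
        gcongr
        linarith
    _ = _ := by ring

/-- majorant -/
noncomputable def hu (v : ℤ × ℤ) : ℝ := (if v = 0 then (1/2 : ℝ) ^ (-(5/4) : ℝ) else 0) + ‖v‖ ^ (-(5/2) : ℝ)

lemma hu_summable : Summable hu := by
  refine Summable.add ?_ (lat_summable (by norm_num))
  exact summable_of_ne_finset_zero (s := {0}) (by intro b hb; simp at hb; simp [hb])

lemma hD_bound (s : ℂ) (R : ℝ) (hs : 3 / 4 < s.re) (hR : ‖s‖ < R) (v : ℤ × ℤ) :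
    ‖hD s v‖ ≤ (4 * (R + 2) * 2 ^ R) * hu v := by
  obtain ⟨m, n⟩ := v
  have hR0 : 0 < R := (norm_nonneg _).trans_lt hR
  -- lower bounds
  have hodd : ∀ t : ℝ, 1 / 2 ≤ ((2 * m + 1 : ℝ) - t) ^ 2 + ((2 * n : ℝ) + t) ^ 2 := by
    intro t
    have h1 : (1 : ℤ) ≤ (2 * m + 2 * n + 1) ^ 2 := by
      have : (2 * m + 2 * n + 1) ≠ 0 := by omega
      have := sq_pos_of_ne_zero this
      omega
    have h2 : (1 : ℝ) ≤ (2 * m + 2 * n + 1) ^ 2 := by exact_mod_cast h1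
    nlinarith [sq_nonneg (((2 * m + 1 : ℝ) - t) - ((2 * n : ℝ) + t))]
  have hlow : ∀ t ∈ Set.Icc (0:ℝ) 1, (‖((m, n) : ℤ × ℤ)‖) ^ 2 ≤ ((2 * m + 1 : ℝ) - t) ^ 2 + ((2 * n : ℝ) + t) ^ 2 := by
    intro t ht
    have key : ∀ k : ℤ, ∀ u ∈ Set.Icc (0:ℝ) 1, (k : ℝ) ^ 2 ≤ (2 * k + u) ^ 2 := by
      intro k u hu
      rcases le_or_gt 0 k with hk | hk
      · have : (0:ℝ) ≤ k := by exact_mod_cast hk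
        nlinarith [hu.1, mul_nonneg this hu.1]
      · have : (k:ℝ) ≤ -1 := by exact_mod_cast (by omega : k ≤ -1)
        have h5 : 2 * k + u ≤ k := by linarith [hu.2]
        nlinarith
    have hm := key m (1 - t) ⟨by linarith [ht.2], by linarith [ht.1]⟩
    have hn := key n t ht
    have : ‖((m, n) : ℤ × ℤ)‖ = max |(m:ℝ)| |(n:ℝ)| := by
      rw [Prod.norm_def]; simp [Int.norm_eq_abs]
    rw [this]
    have hm' : (2 * m + 1 : ℝ) - t = 2 * m + (1 - t) := by ring
    rw [hm']
    rcases max_cases |(m:ℝ)| |(n:ℝ)| with ⟨h, _⟩ | ⟨h, _⟩ <;> rw [h, sq_abs] <;>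
      nlinarith [sq_nonneg (2 * (m:ℝ) + (1 - t)), sq_nonneg (2 * (n:ℝ) + t)]
  have hmain : ∀ M : ℝ, 1 / 2 ≤ M → (∀ t ∈ Set.Icc (0:ℝ) 1, M ≤ ((2 * m + 1 : ℝ) - t) ^ 2 + ((2 * n : ℝ) + t) ^ 2) →
      ‖hD s (m, n)‖ ≤ (4 * (R + 2) * 2 ^ R) * M ^ (-(5 / 4) : ℝ) := by
    intro M hM hMt
    have := norm_image_sub_le_of_norm_deriv_le_segment_01' (f := fun t : ℝ => hf s ((2 * m + 1) - t) (2 * n + t))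
      (C := (4 * (R + 2) * 2 ^ R) * M ^ (-(5 / 4) : ℝ))
      (fun t ht => (hf_hasDeriv s (2 * m + 1) (2 * n) t (by linarith [hodd t])).hasDerivWithinAt)
      (fun t ht => hf_deriv_bound s R hs hR _ _ M hM (hMt t ⟨ht.1, ht.2.le⟩))
    rw [norm_sub_rev] at this
    unfold hD
    convert! this using 3
    · simp
    · simp
  have hc : 0 ≤ 4 * (R + 2) * 2 ^ R := by positivity
  by_cases hv : ((m, n) : ℤ × ℤ) = 0
  · refine (hmain (1/2) le_rfl fun t _ => hodd t).trans ?_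
    gcongr
    unfold hu; rw [if_pos hv]
    have : 0 ≤ ‖((m, n) : ℤ × ℤ)‖ ^ (-(5 / 2) : ℝ) := by positivity
    linarith
  · have h1 : 1 ≤ ‖((m, n) : ℤ × ℤ)‖ := by
      rw [Prod.norm_def]
      have : m ≠ 0 ∨ n ≠ 0 := by
        by_contra! h; exact hv (by simp [h.1, h.2])
      rcases this with h | h
      · refine le_max_of_le_left ?_
        simp only [Int.norm_eq_abs]; exact_mod_cast Int.one_le_abs h
      · refine le_max_of_le_right ?_
        simp only [Int.norm_eq_abs]; exact_mod_cast Int.one_le_abs h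
    refine (hmain (‖((m, n) : ℤ × ℤ)‖ ^ 2) (by nlinarith) hlow).trans ?_
    gcongr
    unfold hu; rw [if_neg hv, zero_add, ← Real.rpow_natCast, ← Real.rpow_mul (by positivity)]
    norm_num

/-- The continued Hecke L-function. -/
noncomputable def hT (s : ℂ) : ℂ := ∑' v, hD s v

lemma hf_diff (x y : ℝ) (h : 0 < x ^ 2 + y ^ 2) : Differentiable ℂ fun s => hf s x y := by
  unfold hf
  intro s
  refine DifferentiableAt.const_mul ?_ _
  exact DifferentiableAt.const_cpow (by fun_prop) (Or.inl (by exact_mod_cast h.ne'))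

lemma hodd_pos1 (m n : ℤ) : 0 < (2 * m + 1 : ℝ) ^ 2 + (2 * n : ℝ) ^ 2 := by
  have : (2 * m + 1 : ℤ) ≠ 0 := by omega
  have : (2 * m + 1 : ℝ) ≠ 0 := by exact_mod_cast this
  positivity

lemma hodd_pos2 (m n : ℤ) : 0 < (2 * m : ℝ) ^ 2 + (2 * n + 1 : ℝ) ^ 2 := by
  have := hodd_pos1 n m
  linarith

lemma hD_diff (v : ℤ × ℤ) : Differentiable ℂ fun s => hD s v := by
  unfold hD
  exact (hf_diff _ _ (hodd_pos1 v.1 v.2)).sub (hf_diff _ _ (hodd_pos2 v.1 v.2))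

lemma hT_diff : DifferentiableOn ℂ hT {s | 3 / 4 < s.re} := by
  intro s hs
  set U : Set ℂ := {s | 3 / 4 < s.re} ∩ {z | ‖z‖ < ‖s‖ + 1}
  have hU : IsOpen U := (isOpen_lt continuous_const Complex.continuous_re).inter
    (isOpen_lt continuous_norm continuous_const)
  have := Complex.differentiableOn_tsum_of_summable_norm (F := fun v s => hD s v) (U := U)
    (hu_summable.mul_left (4 * ((‖s‖ + 1) + 2) * 2 ^ (‖s‖ + 1)))
    (fun v => (hD_diff v).differentiableOn) hU
    (fun v w hw => hD_bound w _ hw.1 hw.2 v)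
  exact ((this.differentiableAt (hU.mem_nhds ⟨hs, by simp⟩))).differentiableWithinAt

lemma hD_summable (s : ℂ) (hs : 3 / 4 < s.re) : Summable (hD s) :=
  Summable.of_norm_bounded (hu_summable.mul_left (4 * ((‖s‖ + 1) + 2) * 2 ^ (‖s‖ + 1)))
    (fun v => hD_bound s _ hs (by simp) v)

end PartC1

section PartC2

open Filter Topology

noncomputable def hr (x y : ℝ) : ℝ := (x ^ 2 - y ^ 2) / (x ^ 2 + y ^ 2) ^ 2

lemma hf_one (x y : ℝ) : hf 1 x y = (hr x y : ℂ) := by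
  unfold hf hr
  rw [show (-1 - 1 : ℂ) = ((-2 : ℤ) : ℂ) by norm_num, Complex.cpow_intCast]
  push_cast
  rw [zpow_neg, div_eq_mul_inv]
  norm_cast

lemma hr_hasSum (a c q : ℝ) (ha : 0 < a) (hq : Complex.exp (2 * Real.pi * Complex.I * ((c + a * Complex.I) / 2)) = q)
    (hq0 : q ≠ 0) (hq1 : |q| < 1) :
    HasSum (fun n : ℤ => hr a (2 * n + c)) (Real.pi ^ 2 * (q / (1 - q) ^ 2)) := by
  let z : UpperHalfPlane := ⟨(c + a * Complex.I) / 2, by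
    simp
    positivity⟩
  have hz : (z : ℂ) = (c + a * Complex.I) / 2 := rfl
  have h := EisensteinSeries.qExpansion_identity (k := 1) le_rfl z
  rw [hz, hq] at h
  simp only [pow_one] at h
  rw [tsum_coe_mul_geometric_of_norm_lt_one (by simpa using hq1)] at h
  have hq1' : q ≠ 1 := by rintro rfl; simp at hq1
  have hval : ((-2 * Real.pi * Complex.I) ^ (1 + 1) / (Nat.factorial 1 : ℂ)) * ((q : ℂ) / (1 - q) ^ 2)
      = ((-4 * (Real.pi ^ 2 * (q / (1 - q) ^ 2)) : ℝ) : ℂ) := by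
    push_cast
    rw [show (-2 * (Real.pi : ℂ) * Complex.I) ^ (1 + 1) = 4 * Real.pi ^ 2 * Complex.I ^ 2 by ring, Complex.I_sq]
    simp; ring
  rw [hval] at h
  have hne : (-4 * (Real.pi ^ 2 * (q / (1 - q) ^ 2)) : ℝ) ≠ 0 := by
    have : 1 - q ≠ 0 := sub_ne_zero.mpr (Ne.symm hq1')
    positivity
  have hsum : Summable fun n : ℤ => 1 / (((c + a * Complex.I) / 2 : ℂ) + n) ^ (1 + 1) := by
    by_contra hns
    rw [tsum_eq_zero_of_not_summable hns] at h
    exact hne (by exact_mod_cast h.symm)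
  have hs := hsum.hasSum
  rw [h] at hs
  have hs2 := (Complex.hasSum_re hs).mul_left (-(1 / 4 : ℝ))
  rw [Complex.ofReal_re] at hs2
  convert! hs2 using 1
  · funext n
    unfold hr
    have e : (((c + a * Complex.I) / 2 : ℂ) + n) = ((2 * n + c : ℝ) + (a : ℝ) * Complex.I) / 2 := by
      push_cast; ring
    rw [e]
    generalize 2 * (n:ℝ) + c = y
    have hN : a ^ 2 + y ^ 2 ≠ 0 := by positivity
    have e2 : (1 : ℂ) / (((y : ℂ) + (a : ℂ) * Complex.I) / 2) ^ (1 + 1) =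
        ((4 * (y ^ 2 - a ^ 2) / (a ^ 2 + y ^ 2) ^ 2 : ℝ) : ℂ) + ((-8 * a * y / (a ^ 2 + y ^ 2) ^ 2 : ℝ) : ℂ) * Complex.I := by
      have hne2 : ((y : ℂ) + (a : ℂ) * Complex.I) ≠ 0 := by
        intro h0
        have := congrArg Complex.im h0
        simp at this; exact ha.ne' this
      have hne3 : ((y : ℂ) - (a : ℂ) * Complex.I) ≠ 0 := by
        intro h0
        have := congrArg Complex.im h0
        simp at this; exact ha.ne' this
      have hN2 : ((a ^ 2 + y ^ 2 : ℂ)) = (y + a * Complex.I) * (y - a * Complex.I) := by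
        ring_nf; rw [Complex.I_sq]; ring
      push_cast
      rw [hN2]
      field_simp
      have hi := Complex.I_sq
      ring_nf
      simp only [hi]
      try ring
    rw [e2, Complex.add_re, Complex.ofReal_re, Complex.re_ofReal_mul, Complex.I_re]
    field_simp
    ring
  · ring

lemma hT_one_inner (m : ℤ) : ∃ r : ℝ, 0 < r ∧ HasSum (fun n : ℤ => hr (2 * m + 1) (2 * n) - hr (2 * m) (2 * n + 1)) r := by
  have heven : ∀ x y, hr x y = hr |x| y := by intro x y; simp [hr]
  have hpi := Real.pi_pos
  have h1 : ∃ r : ℝ, 0 < r ∧ HasSum (fun n : ℤ => hr (2 * m + 1) (2 * n)) r := by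
    simp_rw [heven (2 * (m:ℝ) + 1)]
    have ha : 0 < |(2 * m + 1 : ℝ)| := by
      rw [abs_pos]; exact_mod_cast (by omega : (2 * m + 1 : ℤ) ≠ 0)
    generalize |(2 * m + 1 : ℝ)| = a at ha
    have hq1 : Real.exp (-(Real.pi * a)) < 1 := by
      rw [Real.exp_lt_one_iff]; nlinarith [mul_pos hpi ha]
    have := hr_hasSum a 0 (Real.exp (-(Real.pi * a))) ha (by
      push_cast; congr 1; linear_combination (Real.pi * a : ℂ) * Complex.I_sq) (Real.exp_ne_zero _)
      (by rwa [abs_of_pos (Real.exp_pos _)])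
    simp only [add_zero] at this
    refine ⟨_, ?_, this⟩
    have : 0 < 1 - Real.exp (-(Real.pi * a)) := by linarith
    positivity
  have h2 : ∃ r : ℝ, r ≤ 0 ∧ HasSum (fun n : ℤ => hr (2 * m) (2 * n + 1)) r := by
    rcases eq_or_ne m 0 with rfl | hm
    · refine ⟨∑' n : ℤ, hr (2 * (0:ℤ)) (2 * n + 1), tsum_nonpos fun n => ?_, ?_⟩
      · unfold hr
        apply div_nonpos_of_nonpos_of_nonneg
        · simp; positivity
        · positivity
      · refine Summable.hasSum ?_
        have h3 : Summable fun n : ℤ => 1 / ((n:ℝ)) ^ 2 := Real.summable_one_div_int_pow.mpr (by norm_num)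
        have h4 : Function.Injective (fun n : ℤ => 2 * n + 1) := by intro a b h; simpa using h
        refine (h3.comp_injective h4).neg.congr fun n => ?_
        have : (2 * (n:ℝ) + 1) ≠ 0 := by exact_mod_cast (by omega : (2 * n + 1 : ℤ) ≠ 0)
        simp [hr]
        field_simp
    · simp_rw [heven (2 * (m:ℝ))]
      have ha : 0 < |(2 * m : ℝ)| := by
        rw [abs_pos]; exact_mod_cast (by omega : (2 * m : ℤ) ≠ 0)
      generalize |(2 * m : ℝ)| = a at ha
      have hq1 : Real.exp (-(Real.pi * a)) < 1 := by
        rw [Real.exp_lt_one_iff]; nlinarith [mul_pos hpi ha]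
      have := hr_hasSum a 1 (-Real.exp (-(Real.pi * a))) ha (by
        push_cast
        rw [show 2 * (Real.pi:ℂ) * Complex.I * ((1 + a * Complex.I) / 2) = Real.pi * Complex.I + (-(Real.pi * a)) by
          linear_combination (Real.pi * a : ℂ) * Complex.I_sq, Complex.exp_add, Complex.exp_pi_mul_I]
        ring)
        (neg_ne_zero.mpr (Real.exp_ne_zero _))
        (by rwa [abs_neg, abs_of_pos (Real.exp_pos _)])
      refine ⟨_, ?_, this⟩
      apply mul_nonpos_of_nonneg_of_nonpos (by positivity)
      apply div_nonpos_of_nonpos_of_nonneg _ (by positivity)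
      linarith [Real.exp_pos (-(Real.pi * a))]
  obtain ⟨r1, hr1, hs1⟩ := h1
  obtain ⟨r2, hr2, hs2⟩ := h2
  exact ⟨r1 - r2, by linarith, hs1.sub hs2⟩

lemma hT_one_ne : hT 1 ≠ 0 := by
  have h1 : ∀ v : ℤ × ℤ, hD 1 v = ((hr (2 * v.1 + 1) (2 * v.2) - hr (2 * v.1) (2 * v.2 + 1) : ℝ) : ℂ) := by
    intro v
    unfold hD
    rw [hf_one, hf_one]; push_cast; ring
  have hs := hD_summable 1 (by norm_num)
  have hs' : Summable fun v : ℤ × ℤ => (hr (2 * v.1 + 1) (2 * v.2) - hr (2 * v.1) (2 * v.2 + 1) : ℝ) := by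
    rw [← Complex.summable_ofReal]
    exact hs.congr h1
  choose r hr0 hr1 using hT_one_inner
  have h2 : HasSum r (∑' v : ℤ × ℤ, (hr (2 * v.1 + 1) (2 * v.2) - hr (2 * v.1) (2 * v.2 + 1) : ℝ)) :=
    hs'.hasSum.prod_fiberwise hr1
  unfold hT
  rw [tsum_congr h1, ← Complex.ofReal_tsum]
  have : 0 < ∑' v : ℤ × ℤ, (hr (2 * v.1 + 1) (2 * v.2) - hr (2 * v.1) (2 * v.2 + 1) : ℝ) := by
    rw [← h2.tsum_eq]
    exact h2.summable.tsum_pos (fun m => (hr0 m).le) 0 (hr0 0)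
  exact_mod_cast this.ne'

end PartC2

section PartD1

open Filter Topology

/-- natural-number norm on Gaussian integers -/
def gN (α : GaussianInt) : ℕ := α.norm.natAbs

lemma gN_cast (α : GaussianInt) : (gN α : ℤ) = α.re ^ 2 + α.im ^ 2 := by
  unfold gN
  rw [Int.natAbs_of_nonneg (GaussianInt.norm_nonneg α), Zsqrtd.norm_def]; ring

lemma gN_real (α : GaussianInt) : (gN α : ℝ) = (α.re : ℝ) ^ 2 + (α.im : ℝ) ^ 2 := by
  exact_mod_cast gN_cast α

lemma gN_mul (α β : GaussianInt) : gN (α * β) = gN α * gN β := by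
  unfold gN; rw [Zsqrtd.norm_mul, Int.natAbs_mul]

lemma gN_one : gN 1 = 1 := by simp [gN]

lemma gN_pow (α : GaussianInt) (k : ℕ) : gN (α ^ k) = gN α ^ k := by
  induction k with
  | zero => simp [gN_one]
  | succ k ih => rw [pow_succ, gN_mul, ih, pow_succ]

lemma gN_eq_zero {α : GaussianInt} : gN α = 0 ↔ α = 0 := by
  unfold gN
  rw [Int.natAbs_eq_zero, GaussianInt.norm_eq_zero]

lemma gN_isUnit {α : GaussianInt} : gN α = 1 ↔ IsUnit α := Zsqrtd.norm_eq_one_iff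

/-- sign -/
def geps (α : GaussianInt) : ℤ :=
  if (α.re + α.im) % 2 = 0 then 0 else if α.re % 2 = 0 then -1 else 1

lemma geps_mul (α β : GaussianInt) : geps (α * β) = geps α * geps β := by
  unfold geps
  rw [Zsqrtd.re_mul, Zsqrtd.im_mul]
  rcases Int.emod_two_eq_zero_or_one α.re with h1 | h1 <;>
  rcases Int.emod_two_eq_zero_or_one α.im with h2 | h2 <;>
  rcases Int.emod_two_eq_zero_or_one β.re with h3 | h3 <;>
  rcases Int.emod_two_eq_zero_or_one β.im with h4 | h4 <;>
  simp [Int.add_emod, Int.mul_emod, h1, h2, h3, h4]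

/-- The Hecke character. -/
noncomputable def xi (α : GaussianInt) : ℂ := geps α * ((α : ℂ) ^ 2 / (gN α : ℂ))

lemma xi_mul (α β : GaussianInt) : xi (α * β) = xi α * xi β := by
  unfold xi
  rw [geps_mul, gN_mul, map_mul]
  push_cast
  rw [mul_pow, mul_div_mul_comm]; ring

lemma xi_one : xi 1 = 1 := by simp [xi, geps, gN_one]

lemma xi_zero : xi 0 = 0 := by simp [xi]

lemma xi_pow (α : GaussianInt) (k : ℕ) : xi (α ^ k) = xi α ^ k := by
  induction k with
  | zero => simp [xi_one]
  | succ k ih => rw [pow_succ, xi_mul, ih, pow_succ]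

lemma gN_normSq (α : GaussianInt) : (gN α : ℝ) = ‖(α : ℂ)‖ ^ 2 := by
  rw [gN_real, ← Complex.normSq_eq_norm_sq, GaussianInt.toComplex_def, Complex.normSq_apply]
  simp; ring

lemma xi_norm (α : GaussianInt) : ‖xi α‖ ≤ 1 := by
  unfold xi
  rw [norm_mul, norm_div, norm_pow, ← gN_normSq, Complex.norm_natCast]
  have h1 : ‖((geps α : ℤ) : ℂ)‖ ≤ 1 := by
    unfold geps; split_ifs <;> simp
  have h2 : (gN α : ℝ) / gN α ≤ 1 := div_self_le_one _
  calc _ ≤ (1:ℝ) * 1 := by gcongr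
    _ = 1 := one_mul 1

/-- term of the Hecke series -/
noncomputable def phi (s : ℂ) (α : GaussianInt) : ℂ := xi α * (gN α : ℂ) ^ (-s)

lemma phi_mul (s : ℂ) (α β : GaussianInt) : phi s (α * β) = phi s α * phi s β := by
  unfold phi
  rw [xi_mul, gN_mul, Nat.cast_mul, Complex.natCast_mul_natCast_cpow]; ring

lemma phi_one (s : ℂ) : phi s 1 = 1 := by simp [phi, xi_one, gN_one]

lemma phi_pow (s : ℂ) (α : GaussianInt) (k : ℕ) : phi s (α ^ k) = phi s α ^ k := by
  induction k with
  | zero => simp [phi_one]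
  | succ k ih => rw [pow_succ, phi_mul, ih, pow_succ]

lemma phi_zero (s : ℂ) : phi s 0 = 0 := by simp [phi, xi_zero]

lemma phi_norm {s : ℂ} (α : GaussianInt) : ‖phi s α‖ ≤ (gN α : ℝ) ^ (-s.re) := by
  rcases eq_or_ne α 0 with rfl | h
  · rw [phi_zero, norm_zero]; positivity
  · have : 0 < gN α := Nat.pos_of_ne_zero (mt gN_eq_zero.mp h)
    unfold phi
    rw [norm_mul, Complex.norm_natCast_cpow_of_pos this, Complex.neg_re]
    exact mul_le_of_le_one_left (by positivity) (xi_norm α)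

/-- coordinates -/
def gEquiv : GaussianInt ≃ ℤ × ℤ where
  toFun α := (α.re, α.im)
  invFun v := ⟨v.1, v.2⟩
  left_inv _ := rfl
  right_inv _ := rfl

lemma gN_summable {σ : ℝ} (hσ : 1 < σ) : Summable fun α : GaussianInt => (gN α : ℝ) ^ (-σ) := by
  have h := lat_summable (k := 2 * σ) (by linarith)
  rw [← gEquiv.summable_iff] at h
  refine Summable.of_nonneg_of_le (fun α => by positivity) (fun α => ?_) h
  rcases eq_or_ne α 0 with rfl | h0
  · rw [gN_eq_zero.mpr rfl, Nat.cast_zero, Real.zero_rpow (by linarith)]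
    simp only [Function.comp]; positivity
  simp only [Function.comp]
  have hv : gEquiv α ≠ 0 := by
    intro h
    apply h0
    have := congrArg gEquiv.symm h
    simp [gEquiv] at this
    exact Zsqrtd.ext this.1 this.2
  have hv' : 0 < ‖gEquiv α‖ := norm_pos_iff.mpr hv
  have hle : ‖gEquiv α‖ ^ 2 ≤ (gN α : ℝ) := by
    rw [gN_real]
    have : ‖gEquiv α‖ = max |(α.re:ℝ)| |(α.im:ℝ)| := by
      rw [Prod.norm_def]; simp [Int.norm_eq_abs, gEquiv]
    rw [this]
    rcases max_cases |(α.re:ℝ)| |(α.im:ℝ)| with ⟨h, _⟩ | ⟨h, _⟩ <;> rw [h, sq_abs] <;> nlinarith [sq_nonneg (α.re:ℝ), sq_nonneg (α.im:ℝ)]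
  calc (gN α : ℝ) ^ (-σ) ≤ (‖gEquiv α‖ ^ 2) ^ (-σ) :=
        Real.rpow_le_rpow_of_nonpos (by positivity) hle (by linarith)
    _ = ‖gEquiv α‖ ^ (-(2 * σ)) := by
        rw [← Real.rpow_natCast, ← Real.rpow_mul hv'.le]; congr 1; push_cast; ring

lemma phi_summable {s : ℂ} (hs : 1 < s.re) : Summable (phi s) :=
  Summable.of_norm_bounded (gN_summable hs) fun α => phi_norm α

lemma phi_add_conj (s : ℂ) (a b : ℤ) :
    phi s ⟨a, b⟩ + phi s ⟨a, -b⟩ = 2 * (geps ⟨a, b⟩ * hf s a b) := by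
  have h1 : geps ⟨a, -b⟩ = geps ⟨a, b⟩ := by
    unfold geps
    simp only
    have : (a + -b) % 2 = (a + b) % 2 := by omega
    rw [this]
  have h2 : gN ⟨a, -b⟩ = gN ⟨a, b⟩ := by
    zify; rw [gN_cast, gN_cast]; simp
  unfold phi xi
  rw [h1, h2]
  by_cases h0 : gN ⟨a, b⟩ = 0
  · have h3 := gN_eq_zero.mp h0
    have ha : a = 0 := congrArg Zsqrtd.re h3
    have hb : b = 0 := congrArg Zsqrtd.im h3
    subst ha hb
    simp [geps]
  · have h3 : ((gN ⟨a, b⟩ : ℕ) : ℂ) ≠ 0 := by exact_mod_cast h0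
    unfold hf
    have h4 : (((a:ℝ) ^ 2 + (b:ℝ) ^ 2 : ℝ) : ℂ) = (gN ⟨a, b⟩ : ℂ) := by
      have := gN_real ⟨a, b⟩
      simp only at this
      rw [← this]; norm_cast
    rw [h4, Complex.cpow_sub _ _ h3, Complex.cpow_one, GaussianInt.toComplex_def, GaussianInt.toComplex_def]
    push_cast
    field_simp
    ring_nf
    rw [Complex.I_sq]
    ring

lemma tsum_parity (g : ℤ × ℤ → ℂ) (h4 : Summable g) (h0 : ∀ v : ℤ × ℤ, (v.1 + v.2) % 2 = 0 → g v = 0) :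
    ∑' v, g v = ∑' v : ℤ × ℤ, (g (2 * v.1 + 1, 2 * v.2) + g (2 * v.1, 2 * v.2 + 1)) := by
  let i1 : ℤ × ℤ → ℤ × ℤ := fun v => (2 * v.1 + 1, 2 * v.2)
  let i2 : ℤ × ℤ → ℤ × ℤ := fun v => (2 * v.1, 2 * v.2 + 1)
  have hi1 : Function.Injective i1 := by
    rintro ⟨a, b⟩ ⟨c, d⟩ h; simp [i1] at h; simp [h]
  have hi2 : Function.Injective i2 := by
    rintro ⟨a, b⟩ ⟨c, d⟩ h; simp [i2] at h; simp [h]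
  have hd : Disjoint (Set.range i1) (Set.range i2) := by
    rw [Set.disjoint_left]
    rintro _ ⟨v, rfl⟩ ⟨w, hw⟩
    simp [i1, i2] at hw; omega
  have hsupp : Function.support g ⊆ Set.range i1 ∪ Set.range i2 := by
    rintro ⟨a, b⟩ h
    by_contra hn
    apply h
    apply h0
    by_contra h5
    apply hn
    simp only at h5
    rcases Int.emod_two_eq_zero_or_one a with h6 | h6
    · right; exact ⟨(a / 2, b / 2), by simp [i2]; omega⟩
    · left; exact ⟨(a / 2, b / 2), by simp [i1]; omega⟩
  have e4 : ∑' v, g v = ∑' v, g (i1 v) + ∑' v, g (i2 v) := by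
    rw [← tsum_subtype_eq_of_support_subset hsupp,
      Summable.tsum_union_disjoint hd (h4.subtype _) (h4.subtype _),
      tsum_range g hi1, tsum_range g hi2]
  rw [e4, ← Summable.tsum_add]
  · exact h4.comp_injective hi1
  · exact h4.comp_injective hi2

lemma gsum_conj {s : ℂ} (hs : 1 < s.re) :
    HasSum (fun v : ℤ × ℤ => (geps ⟨v.1, v.2⟩ : ℂ) * hf s v.1 v.2) (∑' α, phi s α) := by
  have h1 : HasSum (fun v : ℤ × ℤ => phi s ⟨v.1, v.2⟩) (∑' α, phi s α) :=
    (Equiv.hasSum_iff (f := phi s) gEquiv.symm).mpr (phi_summable hs).hasSum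
  have h2 : HasSum (fun v : ℤ × ℤ => phi s ⟨v.1, -v.2⟩) (∑' α, phi s α) :=
    (Equiv.hasSum_iff (f := fun v : ℤ × ℤ => phi s ⟨v.1, v.2⟩) ((Equiv.refl ℤ).prodCongr (Equiv.neg ℤ))).mpr h1
  have h3 := (h1.add h2).mul_left (1 / 2)
  have h4 : ∀ v : ℤ × ℤ, 1 / 2 * (phi s ⟨v.1, v.2⟩ + phi s ⟨v.1, -v.2⟩) = (geps ⟨v.1, v.2⟩ : ℂ) * hf s v.1 v.2 := by
    intro v
    rw [phi_add_conj]; ring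
  rw [funext h4] at h3
  rwa [← two_mul, ← mul_assoc, one_div, inv_mul_cancel₀ two_ne_zero, one_mul] at h3

lemma hT_eq {s : ℂ} (hs : 1 < s.re) : hT s = ∑' α, phi s α := by
  rw [← (gsum_conj hs).tsum_eq, tsum_parity _ (gsum_conj hs).summable]
  · unfold hT
    refine tsum_congr fun v => ?_
    simp only [hD]
    have a1 : geps ⟨2 * v.1 + 1, 2 * v.2⟩ = 1 := by
      unfold geps; simp only; rw [if_neg (by omega), if_neg (by omega)]
    have a2 : geps ⟨2 * v.1, 2 * v.2 + 1⟩ = -1 := by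
      unfold geps; simp only; rw [if_neg (by omega), if_pos (by omega)]
    rw [a1, a2]; push_cast; ring
  · intro v hv
    simp [geps, hv]

end PartD1

section PartD2

open Filter Topology

open UniqueFactorizationMonoid in
noncomputable instance gNM : NormalizationMonoid GaussianInt :=
  (UniqueFactorizationMonoid.strongNormalizationMonoid (α := GaussianInt)).toNormalizationMonoid

/-- normalized Gaussian primes -/
abbrev GW := {π : GaussianInt // Prime π ∧ normalize π = π}

open UniqueFactorizationMonoid

lemma gN_assoc {α β : GaussianInt} (h : Associated α β) : gN α = gN β := by
  obtain ⟨u, rfl⟩ := h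
  rw [gN_mul, gN_isUnit.mpr u.isUnit, mul_one]

lemma gN_prime_ge {π : GaussianInt} (h : Prime π) : 2 ≤ gN π := by
  have h0 : gN π ≠ 0 := mt gN_eq_zero.mp h.ne_zero
  have h1 : gN π ≠ 1 := mt gN_isUnit.mp h.not_isUnit
  omega

lemma log_gN_prod (m : Multiset GaussianInt) (h : ∀ x ∈ m, x ≠ 0) :
    Real.log (gN m.prod) = (m.map fun x => Real.log (gN x)).sum := by
  induction m using Multiset.induction_on with
  | empty => simp [gN_one]
  | cons a m ih =>
    rw [Multiset.prod_cons, Multiset.map_cons, Multiset.sum_cons, gN_mul, Nat.cast_mul, Real.log_mul,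
      ih fun x hx => h x (Multiset.mem_cons_of_mem hx)]
    · exact_mod_cast mt gN_eq_zero.mp (h a (Multiset.mem_cons_self a m))
    · have : m.prod ≠ 0 := Multiset.prod_ne_zero fun h0 => h 0 (Multiset.mem_cons_of_mem h0) rfl
      exact_mod_cast mt gN_eq_zero.mp this

open Classical in
lemma log_gN_hasSum {α : GaussianInt} (hα : α ≠ 0) :
    HasSum (fun π : GW => ((normalizedFactors α).count (π : GaussianInt) : ℝ) * Real.log (gN π)) (Real.log (gN α)) := by
  have h1 : Real.log (gN α) = ((normalizedFactors α).map fun x => Real.log (gN x)).sum := by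
    rw [← log_gN_prod _ fun x hx => ne_zero_of_mem_normalizedFactors hx,
      gN_assoc (prod_normalizedFactors hα)]
  have h2 : ∀ x ∈ (normalizedFactors α).toFinset, Prime x ∧ normalize x = x := fun x hx =>
    ⟨prime_of_normalized_factor x (Multiset.mem_toFinset.mp hx),
     normalize_normalized_factor x (Multiset.mem_toFinset.mp hx)⟩
  rw [h1, Finset.sum_multiset_map_count]
  have h3 : ∑ x ∈ (normalizedFactors α).toFinset, (normalizedFactors α).count x • Real.log (gN x) =
      ∑ π ∈ (normalizedFactors α).toFinset.subtype (fun x => Prime x ∧ normalize x = x),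
        ((normalizedFactors α).count (π : GaussianInt) : ℝ) * Real.log (gN π) := by
    rw [Finset.sum_subtype_of_mem (fun x => ((normalizedFactors α).count x : ℝ) * Real.log (gN x)) h2]
    simp
  rw [h3]
  apply hasSum_sum_of_ne_finset_zero
  intro π hπ
  rw [Finset.mem_subtype, Multiset.mem_toFinset] at hπ
  rw [Multiset.count_eq_zero_of_notMem hπ]; simp

open Classical in
lemma pow_dvd_iff_count (π : GW) {α : GaussianInt} (hα : α ≠ 0) (k : ℕ) :
    (π : GaussianInt) ^ k ∣ α ↔ k ≤ (normalizedFactors α).count (π : GaussianInt) := by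
  rw [pow_dvd_iff_le_emultiplicity, emultiplicity_eq_count_normalizedFactors π.2.1.irreducible hα, π.2.2]
  exact Nat.cast_le

lemma log_gN_nonneg (α : GaussianInt) : 0 ≤ Real.log (gN α) := Real.log_natCast_nonneg _

lemma log_gN_summable {σ : ℝ} (hσ : 1 < σ) : Summable fun α : GaussianInt => Real.log (gN α) * (gN α : ℝ) ^ (-σ) := by
  have hε : 0 < (σ - 1) / 2 := by linarith
  refine Summable.of_nonneg_of_le (fun α => mul_nonneg (log_gN_nonneg α) (by positivity)) (fun α => ?_)
    ((gN_summable (σ := σ - (σ - 1) / 2) (by linarith)).mul_left (1 / ((σ - 1) / 2)))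
  rcases eq_or_ne α 0 with rfl | h
  · rw [gN_eq_zero.mpr rfl]; simp; positivity
  have hp : (0:ℝ) < gN α := by exact_mod_cast Nat.pos_of_ne_zero (mt gN_eq_zero.mp h)
  calc Real.log (gN α) * (gN α : ℝ) ^ (-σ)
      ≤ ((gN α : ℝ) ^ ((σ - 1) / 2) / ((σ - 1) / 2)) * (gN α : ℝ) ^ (-σ) := by
        gcongr; exact Real.log_le_rpow_div hp.le hε
    _ = 1 / ((σ - 1) / 2) * ((gN α : ℝ) ^ ((σ - 1) / 2) * (gN α : ℝ) ^ (-σ)) := by ring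
    _ = _ := by rw [← Real.rpow_add hp]; congr 2; ring

/-- general term of the logarithmic derivative -/
noncomputable def vterm (s : ℂ) (x : GW × ℕ) : ℂ := Real.log (gN x.1) * phi s x.1 ^ (x.2 + 1)

lemma gW_half (π : GW) {σ : ℝ} (hσ : 1 ≤ σ) : (gN π : ℝ) ^ (-σ) ≤ 1 / 2 := by
  have h2 : (2:ℝ) ≤ gN π := by exact_mod_cast gN_prime_ge π.2.1
  calc (gN π : ℝ) ^ (-σ) ≤ (gN π : ℝ) ^ (-1 : ℝ) := Real.rpow_le_rpow_of_exponent_le (by linarith) (by linarith)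
    _ = 1 / gN π := by rw [Real.rpow_neg_one, one_div]
    _ ≤ 1 / 2 := one_div_le_one_div_of_le (by norm_num) h2

lemma vterm_norm {s : ℂ} {σ : ℝ} (hσ : 1 ≤ σ) (hs : σ ≤ s.re) (x : GW × ℕ) :
    ‖vterm s x‖ ≤ (Real.log (gN x.1) * (gN x.1 : ℝ) ^ (-σ)) * (1 / 2) ^ x.2 := by
  obtain ⟨π, k⟩ := x
  unfold vterm
  have h2 : (2:ℝ) ≤ gN π := by exact_mod_cast gN_prime_ge π.2.1
  have h1 : ‖phi s π‖ ≤ (gN π : ℝ) ^ (-σ) :=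
    (phi_norm _).trans (Real.rpow_le_rpow_of_exponent_le (by linarith) (by linarith))
  rw [norm_mul, norm_pow, Complex.norm_real, Real.norm_of_nonneg (log_gN_nonneg _), pow_succ']
  have h3 : ‖phi s π‖ ^ k ≤ (1/2) ^ k := pow_le_pow_left₀ (norm_nonneg _) (h1.trans (gW_half π hσ)) k
  rw [mul_assoc]
  have := log_gN_nonneg π.1
  gcongr

lemma vterm_summable {s : ℂ} (hs : 1 < s.re) : Summable fun x => ‖vterm s x‖ := by
  have h1 : Summable fun π : GW => Real.log (gN π) * (gN π : ℝ) ^ (-s.re) :=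
    (log_gN_summable hs).comp_injective Subtype.val_injective
  have h2 : Summable fun k : ℕ => (1 / 2 : ℝ) ^ k := summable_geometric_two
  refine Summable.of_nonneg_of_le (fun x => norm_nonneg _) (fun x => vterm_norm hs.le le_rfl x) ?_
  exact h1.mul_of_nonneg h2 (fun π => mul_nonneg (log_gN_nonneg _) (by positivity)) (fun k => by positivity)

open Classical in
lemma euler_log {s : ℂ} (hs : 1 < s.re) :
    HasSum (fun α : GaussianInt => (Real.log (gN α) : ℂ) * phi s α) ((∑' x, vterm s x) * ∑' α, phi s α) := by
  have hv := vterm_summable hs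
  have hp : Summable fun α => ‖phi s α‖ :=
    Summable.of_nonneg_of_le (fun _ => norm_nonneg _) (fun α => phi_norm α) (gN_summable hs)
  have h1 : HasSum (fun z : (GW × ℕ) × GaussianInt => vterm s z.1 * phi s z.2) ((∑' x, vterm s x) * ∑' α, phi s α) := by
    rw [tsum_mul_tsum_of_summable_norm hv hp]
    exact (summable_mul_of_summable_norm hv hp).hasSum
  set G : GaussianInt × (GW × ℕ) → ℂ := fun y =>
    if ((y.2.1 : GaussianInt) ^ (y.2.2 + 1) ∣ y.1) then (Real.log (gN y.2.1) : ℂ) * phi s y.1 else 0 with hG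
  let i : (GW × ℕ) × GaussianInt → GaussianInt × (GW × ℕ) := fun z => ((z.1.1 : GaussianInt) ^ (z.1.2 + 1) * z.2, z.1)
  have hi : Function.Injective i := by
    rintro ⟨⟨π, k⟩, β⟩ ⟨⟨π', k'⟩, β'⟩ h
    simp only [i, Prod.mk.injEq] at h
    obtain ⟨h1, rfl, rfl⟩ := h
    have := mul_left_cancel₀ (pow_ne_zero _ π.2.1.ne_zero) h1
    simp [this]
  have h2 : HasSum G ((∑' x, vterm s x) * ∑' α, phi s α) := by
    rw [← hi.hasSum_iff]
    · refine h1.congr_fun ?_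
      rintro ⟨⟨π, k⟩, β⟩
      simp only [hG, i, Function.comp, dvd_mul_right, if_true, vterm, phi_mul, phi_pow]
      ring
    · rintro ⟨α, π, k⟩ hx
      simp only [hG]
      rw [if_neg]
      rintro ⟨β, hβ⟩
      exact hx ⟨((π, k), β), by simp only [i]; rw [← hβ]⟩
  refine h2.prod_fiberwise fun α => ?_
  rcases eq_or_ne α 0 with rfl | hα
  · simp only [hG, phi_zero, mul_zero, ite_self]; exact hasSum_zero
  have h3 : Summable fun x : GW × ℕ => G (α, x) := h2.summable.prod_factor α
  have h4 : ∀ π : GW, HasSum (fun k : ℕ => G (α, (π, k)))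
      ((((normalizedFactors α).count (π : GaussianInt) : ℝ) * Real.log (gN π) : ℝ) * phi s α) := by
    intro π
    have h5 : ∀ k, G (α, (π, k)) = if k < (normalizedFactors α).count (π : GaussianInt) then
        (Real.log (gN π) : ℂ) * phi s α else 0 := by
      intro k
      simp only [hG]
      congr 1
      rw [pow_dvd_iff_count π hα, Nat.succ_le_iff]
    have h6 : HasSum (fun k => G (α, (π, k)))
        (∑ k ∈ Finset.range ((normalizedFactors α).count (π : GaussianInt)), G (α, (π, k))) :=
      hasSum_sum_of_ne_finset_zero (by
        intro k hk
        rw [Finset.mem_range] at hk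
        rw [h5, if_neg hk])
    rw [Finset.sum_congr rfl fun k hk => by rw [h5, if_pos (Finset.mem_range.mp hk)]] at h6
    convert! h6 using 1
    rw [Finset.sum_const, Finset.card_range, nsmul_eq_mul]; push_cast; ring
  have h7 := h3.hasSum.prod_fiberwise h4
  have h8 := (Complex.hasSum_ofReal.mpr (log_gN_hasSum hα)).mul_right (phi s α)
  rw [← h7.unique h8]
  exact h3.hasSum

lemma phi_hasDeriv (α : GaussianInt) (s : ℂ) : HasDerivAt (fun s => phi s α) (-((Real.log (gN α) : ℂ) * phi s α)) s := by
  rcases eq_or_ne α 0 with rfl | h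
  · simp only [phi_zero, mul_zero, neg_zero]; exact hasDerivAt_const _ _
  have h0 : ((gN α : ℕ) : ℂ) ≠ 0 := by exact_mod_cast mt gN_eq_zero.mp h
  unfold phi
  have := ((hasDerivAt_neg s).const_cpow (c := ((gN α : ℕ) : ℂ)) (Or.inl h0)).const_mul (xi α)
  convert! this using 1
  rw [Complex.ofReal_log (by positivity)]
  push_cast; ring

lemma hT_deriv {s : ℂ} (hs : 1 < s.re) : (∑' x, vterm s x) * hT s = - deriv hT s := by
  have hσ : 1 < (1 + s.re) / 2 := by linarith
  set σ := (1 + s.re) / 2 with hσd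
  set U : Set ℂ := {z | σ < z.re}
  have hU : IsOpen U := isOpen_lt continuous_const Complex.continuous_re
  have hsU : s ∈ U := by change σ < s.re; linarith
  have h1 := Complex.hasSum_deriv_of_summable_norm (F := fun α s => phi s α) (U := U) (z := s)
    (gN_summable hσ) (fun α z _ => (phi_hasDeriv α z).differentiableAt.differentiableWithinAt) hU
    (fun α w hw => (phi_norm α).trans (by
      rcases eq_or_ne α 0 with rfl | h
      · have hw' : σ < w.re := hw
        rw [gN_eq_zero.mpr rfl, Nat.cast_zero, Real.zero_rpow (by linarith), Real.zero_rpow (by linarith)]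
      · have hw' : σ < w.re := hw
        have : 1 ≤ gN α := Nat.pos_of_ne_zero (mt gN_eq_zero.mp h)
        exact Real.rpow_le_rpow_of_exponent_le (by exact_mod_cast this) (by linarith))) hsU
  have h2 : deriv (fun w => ∑' α, phi w α) s = deriv hT s := by
    apply Filter.EventuallyEq.deriv_eq
    filter_upwards [hU.mem_nhds hsU] with w hw
    have hw' : σ < w.re := hw
    rw [hT_eq (by linarith)]
  rw [h2] at h1
  simp_rw [(phi_hasDeriv _ s).deriv] at h1
  rw [hT_eq hs, (euler_log hs).unique (by simpa using h1.neg)]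

end PartD2

section PartD3

open Filter Topology

/-- log restricted to primes congruent to one mod four -/
noncomputable def lgp (n : ℕ) : ℝ := if n.Prime ∧ n % 4 = 1 then Real.log n else 0

/-- the normalized trace -/
noncomputable def xx (n : ℕ) : ℝ := -(nagaoAverage n) / 2 - 1

lemma xx_eq {n : ℕ} (hn : n.Prime) (h1 : n % 4 = 1) :
    ∃ a b : ℤ, a % 2 = 1 ∧ (n : ℤ) = a ^ 2 + b ^ 2 ∧ xx n = ((a:ℝ) ^ 2 - (b:ℝ) ^ 2) / n := by
  have := Fact.mk hn
  obtain ⟨a, b, h2, h3, h4⟩ := jac_one_mod_four (p := n) h1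
  refine ⟨a, b, h3, h4, ?_⟩
  unfold xx
  have hn0 : (n:ℝ) ≠ 0 := by exact_mod_cast hn.ne_zero
  have h5 : (n:ℝ) = (a:ℝ) ^ 2 + (b:ℝ) ^ 2 := by exact_mod_cast h4
  rw [nagao_eq (p := n) (by rintro rfl; omega), h2]
  push_cast
  field_simp
  rw [h5]; ring

lemma xx_abs {n : ℕ} (hn : n.Prime) (h1 : n % 4 = 1) : |xx n| ≤ 1 := by
  obtain ⟨a, b, -, h2, h3⟩ := xx_eq hn h1
  have h5 : (n:ℝ) = (a:ℝ) ^ 2 + (b:ℝ) ^ 2 := by exact_mod_cast h2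
  have hn0 : (0:ℝ) < n := by exact_mod_cast hn.pos
  rw [h3, abs_le, le_div_iff₀ hn0, div_le_iff₀ hn0]
  constructor <;> nlinarith [sq_nonneg (a:ℝ), sq_nonneg (b:ℝ)]

lemma xi_unit {u : GaussianInt} (h : IsUnit u) : xi u = 1 := by
  have h1 := gN_cast u
  rw [gN_isUnit.mpr h, Nat.cast_one] at h1
  have hre : -1 ≤ u.re ∧ u.re ≤ 1 := by constructor <;> nlinarith [sq_nonneg u.re, sq_nonneg u.im]
  have him : -1 ≤ u.im ∧ u.im ≤ 1 := by constructor <;> nlinarith [sq_nonneg u.re, sq_nonneg u.im]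
  obtain ⟨x, y⟩ := u
  simp only at hre him h1
  unfold xi
  rw [gN_isUnit.mpr h]
  obtain ⟨h2, h3⟩ := hre
  obtain ⟨h4, h5⟩ := him
  interval_cases x <;> interval_cases y <;> first
    | (exfalso; norm_num at h1; done)
    | (simp [geps, GaussianInt.toComplex_def])

lemma xi_assoc {α β : GaussianInt} (h : Associated α β) : xi α = xi β := by
  obtain ⟨u, rfl⟩ := h
  rw [xi_mul, xi_unit u.isUnit, mul_one]

lemma gprime_of_norm {π : GaussianInt} (h : (gN π).Prime) : Prime π := by
  apply Irreducible.prime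
  constructor
  · intro hu; rw [gN_isUnit.mpr hu] at h; exact Nat.not_prime_one h
  · rintro x y rfl
    rw [gN_mul] at h
    rcases Nat.prime_mul_iff.mp h with ⟨-, h⟩ | ⟨-, h⟩
    · right; exact gN_isUnit.mp h
    · left; exact gN_isUnit.mp h

lemma gN_star (π : GaussianInt) : ((gN π : ℕ) : GaussianInt) = π * star π := by
  have h := gN_cast π
  apply Zsqrtd.ext
  · simp; rw [h]; ring
  · simp; ring

/-- the fibre element -/
noncomputable def gw (π : GaussianInt) (h : (gN π).Prime) : GW :=
  ⟨normalize π, (normalize_associated π).symm.prime (gprime_of_norm h), normalize_idem π⟩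

lemma gW_classify (π : GW) (hnp : ¬ (gN (π : GaussianInt)).Prime) :
    ∃ q : ℕ, gN (π : GaussianInt) = q ^ 2 ∧ (π : GaussianInt) = normalize (q : GaussianInt) := by
  have h1 : (π : GaussianInt) ∣ ((gN (π : GaussianInt) : ℕ) : GaussianInt) := by
    rw [gN_star]; exact dvd_mul_right _ _
  have h0 := mt gN_eq_zero.mp π.2.1.ne_zero
  have h2 : ∃ q : ℕ, q.Prime ∧ (π : GaussianInt) ∣ (q : GaussianInt) := by
    have h3 : (π : GaussianInt) ∣ (((gN (π : GaussianInt)).primeFactorsList.map fun q : ℕ => (q : GaussianInt)).prod) := by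
      rw [← Nat.cast_list_prod, Nat.prod_primeFactorsList h0]; exact h1
    obtain ⟨x, hx, hd⟩ := (π.2.1.dvd_prod_iff).mp h3
    obtain ⟨q, hq, rfl⟩ := List.mem_map.mp hx
    exact ⟨q, Nat.prime_of_mem_primeFactorsList hq, hd⟩
  obtain ⟨q, hq, β, hβ⟩ := h2
  have hqN : gN (q : GaussianInt) = q ^ 2 := by
    have := gN_cast (q : GaussianInt)
    simp at this
    exact_mod_cast this
  have h4 : gN (π : GaussianInt) * gN β = q ^ 2 := by rw [← gN_mul, ← hβ, hqN]
  have h5 : gN (π : GaussianInt) ∣ q ^ 2 := ⟨_, h4.symm⟩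
  obtain ⟨k, hk, hk2⟩ := (Nat.dvd_prime_pow hq).mp h5
  have hge := gN_prime_ge π.2.1
  interval_cases k
  · rw [pow_zero] at hk2; omega
  · rw [pow_one] at hk2; rw [hk2] at hnp; exact absurd hq hnp
  · refine ⟨q, hk2, ?_⟩
    rw [hk2] at h4
    have h6 : gN β = 1 := by
      have : 0 < q ^ 2 := pow_pos hq.pos 2
      exact Nat.eq_of_mul_eq_mul_left this (by rw [h4, mul_one])
    have h7 : Associated (π : GaussianInt) (q : GaussianInt) := by
      rw [hβ]; exact associated_mul_unit_right _ _ (gN_isUnit.mp h6)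
    rw [← normalize_eq_normalize_iff_associated.mpr h7, π.2.2]

lemma gW_fiber {n : ℕ} (hn : n.Prime) (h1 : n % 4 = 1) (s : ℂ) :
    ∑' π : (fun π : GW => gN (π : GaussianInt)) ⁻¹' {n}, (Real.log (gN (π : GW).1) : ℂ) * phi s (π : GW).1 =
      2 * ((Real.log n : ℂ) * (xx n : ℂ)) * (n : ℂ) ^ (-s) := by
  classical
  obtain ⟨a, b, ha, hab, hx⟩ := xx_eq hn h1
  set α : GaussianInt := ⟨a, b⟩ with hα
  set β : GaussianInt := ⟨a, -b⟩ with hβ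
  have hNα : gN α = n := by
    have := gN_cast α; simp only [hα] at this; exact_mod_cast (this.trans hab.symm)
  have hNβ : gN β = n := by
    have := gN_cast β; simp only [hβ] at this; rw [neg_sq] at this; exact_mod_cast (this.trans hab.symm)
  have hb : b % 2 = 0 := by
    rcases Int.emod_two_eq_zero_or_one b with h | h
    · exact h
    · exfalso
      have h2 : ((n:ℤ)) % 2 = 1 := by omega
      rw [hab] at h2
      simp [pow_two, Int.add_emod, Int.mul_emod, ha, h] at h2
  have hb0 : b ≠ 0 := by
    rintro rfl
    have : n = a.natAbs ^ 2 := by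
      zify; rw [sq_abs, hab]; ring
    rw [this] at hn
    exact Nat.Prime.not_prime_pow le_rfl hn
  have hn0 : (n:ℂ) ≠ 0 := by exact_mod_cast hn.ne_zero
  have xα : xi α = ((a:ℂ) + b * Complex.I) ^ 2 / n := by
    unfold xi; rw [hNα, hα, GaussianInt.toComplex_def]
    have : geps ⟨a, b⟩ = 1 := by unfold geps; simp only; rw [if_neg (by omega), if_neg (by omega)]
    rw [this]; simp
  have xβ : xi β = ((a:ℂ) - b * Complex.I) ^ 2 / n := by
    unfold xi; rw [hNβ, hβ, GaussianInt.toComplex_def]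
    have : geps ⟨a, -b⟩ = 1 := by unfold geps; simp only; rw [if_neg (by omega), if_neg (by omega)]
    rw [this]; simp [sub_eq_add_neg]
  have pα : (gN α).Prime := by rw [hNα]; exact hn
  have pβ : (gN β).Prime := by rw [hNβ]; exact hn
  have aα := normalize_associated α
  have aβ := normalize_associated β
  have hne : gw α pα ≠ gw β pβ := by
    intro h
    have h2 : normalize α = normalize β := congrArg Subtype.val h
    have h3 := xi_assoc (normalize_eq_normalize_iff_associated.mp h2)
    rw [xα, xβ, div_left_inj' hn0] at h3
    have h4 : (4 * a * b : ℂ) * Complex.I = 0 := by linear_combination h3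
    have ha0 : a ≠ 0 := by rintro rfl; simp at ha
    simp [ha0, hb0] at h4
  have hset : (fun π : GW => gN (π : GaussianInt)) ⁻¹' {n} = (({gw α pα, gw β pβ} : Finset GW) : Set GW) := by
    ext π
    simp only [Set.mem_preimage, Set.mem_singleton_iff, Finset.coe_insert, Finset.coe_singleton, Set.mem_insert_iff]
    constructor
    · intro h
      have h2 : (π : GaussianInt) ∣ α * β := by
        have h3 : α * β = (n : GaussianInt) := by
          rw [← hNα, gN_star]; congr 1
        rw [h3, ← h, gN_star]; exact dvd_mul_right _ _
      rcases π.2.1.dvd_or_dvd h2 with h4 | h4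
      · left
        apply Subtype.ext
        have := π.2.1.associated_of_dvd (gprime_of_norm pα) h4
        exact π.2.2.symm.trans (normalize_eq_normalize_iff_associated.mpr this)
      · right
        apply Subtype.ext
        have := π.2.1.associated_of_dvd (gprime_of_norm pβ) h4
        exact π.2.2.symm.trans (normalize_eq_normalize_iff_associated.mpr this)
    · rintro (rfl | rfl)
      · exact (gN_assoc aα).trans hNα
      · exact (gN_assoc aβ).trans hNβ
  rw [hset, Finset.tsum_subtype' _ (fun π : GW => (Real.log (gN (π : GW).1) : ℂ) * phi s (π : GW).1),
    Finset.sum_pair hne]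
  have e1 : gN (gw α pα).1 = n := (gN_assoc aα).trans hNα
  have e2 : gN (gw β pβ).1 = n := (gN_assoc aβ).trans hNβ
  have e3 : xi (gw α pα).1 = _ := (xi_assoc aα).trans xα
  have e4 : xi (gw β pβ).1 = _ := (xi_assoc aβ).trans xβ
  unfold phi
  rw [e1, e2, e3, e4, hx]
  push_cast
  field_simp
  linear_combination (2 * Complex.log n * (n:ℂ) ^ (-s) * (b:ℂ)^2) * Complex.I_sq

end PartD3

section PartD4

open Filter Topology

lemma summable_log_sq : Summable fun q : ℕ => Real.log ((q ^ 2 : ℕ)) * (((q ^ 2 : ℕ) : ℝ)) ^ (-1 : ℝ) := by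
  have h : Summable fun q : ℕ => 4 * (q : ℝ) ^ (-(3/2) : ℝ) :=
    (Real.summable_nat_rpow.mpr (by norm_num)).mul_left 4
  refine Summable.of_nonneg_of_le (fun q => mul_nonneg (Real.log_natCast_nonneg _) (by positivity)) (fun q => ?_) h
  rcases Nat.eq_zero_or_pos q with rfl | hq
  · simp
  have hq' : (0:ℝ) < q := by exact_mod_cast hq
  have h1 := Real.log_le_rpow_div hq'.le (ε := 1/2) (by norm_num)
  push_cast
  rw [Real.log_pow, Real.rpow_neg_one]
  have h2 : (q:ℝ) ^ (-(3/2) : ℝ) = (q:ℝ) ^ (1/2 : ℝ) * ((q:ℝ) ^ 2)⁻¹ := by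
    rw [← Real.rpow_natCast, ← Real.rpow_neg hq'.le, ← Real.rpow_add hq']; norm_num
  rw [h2]
  push_cast
  calc 2 * Real.log q * ((q:ℝ)^2)⁻¹ ≤ 2 * ((q:ℝ) ^ (1/2 : ℝ) / (1/2)) * ((q:ℝ)^2)⁻¹ := by gcongr
    _ = _ := by ring

lemma phi_cont (α : GaussianInt) : Continuous fun s => phi s α :=
  continuous_iff_continuousAt.mpr fun s => (phi_hasDeriv α s).continuousAt

open Classical in
/-- contribution of inert primes -/
noncomputable def iterm (s : ℂ) (π : GW) : ℂ :=
  if (gN (π : GaussianInt)).Prime then 0 else (Real.log (gN (π : GaussianInt)) : ℂ) * phi s π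

open Classical in
/-- contribution of split primes -/
noncomputable def sterm (s : ℂ) (π : GW) : ℂ :=
  if (gN (π : GaussianInt)).Prime then (Real.log (gN (π : GaussianInt)) : ℂ) * phi s π else 0

lemma inert_summable : Summable fun π : {π : GW // ¬ (gN (π : GaussianInt)).Prime} =>
    Real.log (gN ((π : GW) : GaussianInt)) * (gN ((π : GW) : GaussianInt) : ℝ) ^ (-1 : ℝ) := by
  choose f hf1 hf2 using fun π : {π : GW // ¬ (gN (π : GaussianInt)).Prime} => gW_classify π.1 π.2
  have hi : Function.Injective f := by
    intro x y h
    apply Subtype.ext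
    apply Subtype.ext
    rw [hf2, hf2, h]
  convert! summable_log_sq.comp_injective hi using 2 with π
  simp only [Function.comp]
  rw [hf1]

lemma iterm_cont : ContinuousOn (fun s => ∑' π, iterm s π) {s | 1 ≤ s.re} := by
  classical
  have h : Summable (Set.indicator {π : GW | ¬ (gN (π : GaussianInt)).Prime} (fun π : GW =>
      Real.log (gN (π : GaussianInt)) * (gN (π : GaussianInt) : ℝ) ^ (-1 : ℝ))) := by
    rw [← summable_subtype_iff_indicator]; exact inert_summable
  refine continuousOn_tsum (fun π => ?_) h (fun π s hs => ?_)
  · unfold iterm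
    split_ifs
    · exact continuousOn_const
    · exact (continuous_const.mul (phi_cont _)).continuousOn
  · unfold iterm
    have hs' : 1 ≤ s.re := hs
    have h2 : (2:ℝ) ≤ gN (π : GaussianInt) := by exact_mod_cast gN_prime_ge π.2.1
    split_ifs with hp
    · rw [norm_zero]
      refine Set.indicator_nonneg (fun x _ => mul_nonneg (log_gN_nonneg _) (by positivity)) _
    · rw [Set.indicator_of_mem (show π ∈ {π : GW | ¬ (gN (π : GaussianInt)).Prime} from hp), norm_mul,
        Complex.norm_real, Real.norm_of_nonneg (log_gN_nonneg _)]
      refine mul_le_mul_of_nonneg_left ((phi_norm _).trans ?_) (log_gN_nonneg _)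
      exact Real.rpow_le_rpow_of_exponent_le (by linarith) (by linarith)

lemma v2_cont : ContinuousOn (fun s => ∑' x : GW × ℕ, vterm s (x.1, x.2 + 1)) {s | 1 ≤ s.re} := by
  have h1 : Summable fun π : GW => Real.log (gN (π : GaussianInt)) * (gN (π : GaussianInt) : ℝ) ^ (-2 : ℝ) :=
    (log_gN_summable (by norm_num)).comp_injective Subtype.val_injective
  have h2 : Summable fun k : ℕ => (1 / 2 : ℝ) ^ k := summable_geometric_two
  have h3 := h1.mul_of_nonneg h2 (fun π => mul_nonneg (log_gN_nonneg _) (by positivity)) (fun k => by positivity)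
  refine continuousOn_tsum (fun x => ?_) h3 (fun x s hs => ?_)
  · unfold vterm
    exact (continuous_const.mul ((phi_cont _).pow _)).continuousOn
  · obtain ⟨π, k⟩ := x
    have hs' : 1 ≤ s.re := hs
    unfold vterm
    simp only
    have h2 : (2:ℝ) ≤ gN (π : GaussianInt) := by exact_mod_cast gN_prime_ge π.2.1
    have h1 : ‖phi s π‖ ≤ (gN (π : GaussianInt) : ℝ) ^ (-1 : ℝ) :=
      (phi_norm _).trans (Real.rpow_le_rpow_of_exponent_le (by linarith) (by linarith))
    rw [norm_mul, norm_pow, Complex.norm_real, Real.norm_of_nonneg (log_gN_nonneg _), mul_assoc]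
    refine mul_le_mul_of_nonneg_left ?_ (log_gN_nonneg _)
    have h3 : ‖phi s π‖ ^ k ≤ (1/2) ^ k := pow_le_pow_left₀ (norm_nonneg _) (h1.trans (gW_half π le_rfl)) k
    have h4 : (gN (π : GaussianInt) : ℝ) ^ (-2 : ℝ) = (gN (π : GaussianInt) : ℝ) ^ (-1 : ℝ) * (gN (π : GaussianInt) : ℝ) ^ (-1 : ℝ) := by
      rw [← Real.rpow_add (by linarith)]; norm_num
    rw [h4, pow_succ, pow_succ, mul_comm]
    calc ‖phi s π‖ * (‖phi s π‖ ^ k * ‖phi s π‖) = (‖phi s π‖ * ‖phi s π‖) * ‖phi s π‖ ^ k := by ring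
      _ ≤ _ := by gcongr

lemma fiber_zero {n : ℕ} (h : ¬ (n.Prime ∧ n % 4 = 1)) (s : ℂ) (π : GW) (hπ : gN (π : GaussianInt) = n) :
    sterm s π = 0 := by
  unfold sterm
  split_ifs with hp
  · rw [hπ] at hp
    have h1 : ¬ (n % 4 = 1) := fun h1 => h ⟨hp, h1⟩
    have hc := gN_cast (π : GaussianInt)
    rw [hπ] at hc
    have h2 : xi (π : GaussianInt) = 0 := by
      unfold xi
      have : geps (π : GaussianInt) = 0 := by
        unfold geps
        rw [if_pos]
        by_contra h3
        apply h1
        have h4 : (n : ℤ) % 4 = 1 := by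
          rw [hc]
          have hr : (π : GaussianInt).re % 4 = 0 ∨ (π : GaussianInt).re % 4 = 1 ∨ (π : GaussianInt).re % 4 = 2 ∨ (π : GaussianInt).re % 4 = 3 := by omega
          have hi : (π : GaussianInt).im % 4 = 0 ∨ (π : GaussianInt).im % 4 = 1 ∨ (π : GaussianInt).im % 4 = 2 ∨ (π : GaussianInt).im % 4 = 3 := by omega
          rcases hr with hr | hr | hr | hr <;> rcases hi with hi | hi | hi | hi <;>
            first | (exfalso; omega) | simp [pow_two, Int.add_emod, Int.mul_emod, hr, hi]
        omega
      rw [this]; simp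
    unfold phi; rw [h2]; simp
  · rfl

lemma sterm_hasSum {s : ℂ} (hs : Summable (sterm s)) :
    ∑' π, sterm s π = 2 * LSeries (fun n => ((lgp n * xx n : ℝ) : ℂ)) s := by
  have h1 := (hs.hasSum.tsum_fiberwise (fun π : GW => gN (π : GaussianInt))).tsum_eq
  rw [← h1, LSeries, ← tsum_mul_left]
  congr 1; ext n
  by_cases h : n.Prime ∧ n % 4 = 1
  · have h0 : n ≠ 0 := h.1.ne_zero
    have h2 := gW_fiber h.1 h.2 s
    rw [LSeries.term_of_ne_zero h0]
    have h3 : ∀ π : (fun π : GW => gN (π : GaussianInt)) ⁻¹' {n}, sterm s (π : GW) = (Real.log (gN (π : GW).1) : ℂ) * phi s (π : GW).1 := by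
      rintro ⟨π, hπ⟩
      have : gN (π : GaussianInt) = n := hπ
      unfold sterm
      rw [if_pos (by rw [this]; exact h.1)]
    simp_rw [h3]
    rw [h2, Complex.cpow_neg]
    unfold lgp
    rw [if_pos h]; push_cast; ring
  · have h3 : ∀ π : (fun π : GW => gN (π : GaussianInt)) ⁻¹' {n}, sterm s (π : GW) = 0 := by
      rintro ⟨π, hπ⟩
      exact fiber_zero h s π hπ
    simp_rw [h3]
    rw [tsum_zero]
    have h4 : lgp n = 0 := if_neg h
    simp [LSeries.term, h4]

lemma V_decomp : ∃ K : ℂ → ℂ, ContinuousOn K {s | 1 ≤ s.re} ∧ ∀ s : ℂ, 1 < s.re →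
    (∑' x, vterm s x) = 2 * LSeries (fun n => ((lgp n * xx n : ℝ) : ℂ)) s + K s := by
  refine ⟨fun s => (∑' π, iterm s π) + ∑' x : GW × ℕ, vterm s (x.1, x.2 + 1), iterm_cont.add v2_cont, fun s hs => ?_⟩
  have hv : Summable (vterm s) := (vterm_summable hs).of_norm
  have h1 : Summable fun π : GW => vterm s (π, 0) :=
    hv.comp_injective (i := fun π : GW => (π, 0)) fun x y h => (Prod.mk.inj h).1
  have h2 : Summable fun x : GW × ℕ => vterm s (x.1, x.2 + 1) :=
    hv.comp_injective (i := fun x : GW × ℕ => (x.1, x.2 + 1)) fun x y h => by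
      simp only [Prod.mk.injEq, add_left_inj] at h; exact Prod.ext h.1 h.2
  have h3 : ∑' x, vterm s x = (∑' π : GW, vterm s (π, 0)) + ∑' x : GW × ℕ, vterm s (x.1, x.2 + 1) := by
    rw [hv.tsum_prod, h2.tsum_prod, ← Summable.tsum_add h1 h2.prod]
    congr 1; ext π
    have : Summable fun k => vterm s (π, k) := hv.prod_factor π
    rw [this.tsum_eq_zero_add]
  have h1s : Summable fun π : GW => ‖vterm s (π, 0)‖ := h1.norm
  have h4 : ∀ π : GW, vterm s (π, 0) = sterm s π + iterm s π := by
    intro π; unfold vterm sterm iterm; split_ifs <;> simp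
  have h5 : Summable (sterm s) := by
    refine Summable.of_norm_bounded h1s fun π => ?_
    unfold sterm vterm; split_ifs <;> simp; positivity
  have h6 : Summable (iterm s) := by
    refine Summable.of_norm_bounded h1s fun π => ?_
    unfold iterm vterm; split_ifs <;> simp; positivity
  rw [h3]
  simp_rw [h4]
  rw [h5.tsum_add h6, sterm_hasSum h5]
  ring

end PartD4

section PartE1

open Filter Topology

lemma lgp_nonneg (n : ℕ) : 0 ≤ lgp n := by
  unfold lgp; split_ifs
  · exact Real.log_natCast_nonneg _
  · exact le_rfl

lemma lgp_le (n : ℕ) : lgp n ≤ ArithmeticFunction.vonMangoldt n := by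
  unfold lgp; split_ifs with h
  · rw [ArithmeticFunction.vonMangoldt_apply_prime h.1]
  · exact ArithmeticFunction.vonMangoldt_nonneg

lemma lgp_xx_le (n : ℕ) : |lgp n * xx n| ≤ lgp n := by
  by_cases h : n.Prime ∧ n % 4 = 1
  · rw [abs_mul, abs_of_nonneg (lgp_nonneg n)]
    exact mul_le_of_le_one_right (lgp_nonneg n) (xx_abs h.1 h.2)
  · have : lgp n = 0 := if_neg h
    rw [this]; simp

lemma lgp_summable {s : ℂ} (hs : 1 < s.re) : LSeriesSummable (fun n => (lgp n : ℂ)) s := by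
  refine Summable.of_norm_bounded (ArithmeticFunction.LSeriesSummable_vonMangoldt hs).norm fun n => ?_
  apply LSeries.norm_term_le
  rw [Complex.norm_real, Complex.norm_real, Real.norm_of_nonneg (lgp_nonneg n),
    Real.norm_of_nonneg ArithmeticFunction.vonMangoldt_nonneg]
  exact lgp_le n

lemma lgp_xx_summable {s : ℂ} (hs : 1 < s.re) : LSeriesSummable (fun n => ((lgp n * xx n : ℝ) : ℂ)) s := by
  refine Summable.of_norm_bounded (lgp_summable hs).norm fun n => ?_
  apply LSeries.norm_term_le
  rw [Complex.norm_real, Complex.norm_real, Real.norm_of_nonneg (lgp_nonneg n)]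
  exact lgp_xx_le n

/-- von Mangoldt on non-primes -/
noncomputable def npl (n : ℕ) : ℝ :=
  if n.Prime then 0 else ArithmeticFunction.vonMangoldt.residueClass (1 : ZMod 4) n

lemma resid_eq (n : ℕ) : ArithmeticFunction.vonMangoldt.residueClass (1 : ZMod 4) n = lgp n + npl n := by
  unfold lgp npl
  by_cases hp : n.Prime
  · by_cases h : n % 4 = 1
    · have h2 : ((n : ℕ) : ZMod 4) = 1 := by
        have := (ZMod.natCast_eq_natCast_iff' n 1 4).mpr (by omega)
        simpa using this
      rw [if_pos ⟨hp, h⟩, if_pos hp, add_zero, ArithmeticFunction.vonMangoldt.residueClass,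
        Set.indicator_of_mem (show n ∈ {n : ℕ | (n : ZMod 4) = 1} from h2),
        ArithmeticFunction.vonMangoldt_apply_prime hp]
    · have h2 : ¬ ((n : ℕ) : ZMod 4) = 1 := by
        intro h3
        have := (ZMod.natCast_eq_natCast_iff' n 1 4).mp (by simpa using h3)
        omega
      rw [if_neg (fun h3 => h h3.2), if_pos hp, add_zero, ArithmeticFunction.vonMangoldt.residueClass,
        Set.indicator_of_notMem (show n ∉ {n : ℕ | (n : ZMod 4) = 1} from h2)]
  · rw [if_neg (fun h3 => hp h3.1), if_neg hp, zero_add]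

lemma npl_bound {s : ℂ} (hs : 1 ≤ s.re) (n : ℕ) : ‖LSeries.term (fun n => (npl n : ℂ)) s n‖ ≤ npl n / n := by
  have h0 : 0 ≤ npl n := by
    unfold npl; split_ifs
    · exact le_rfl
    · exact ArithmeticFunction.vonMangoldt.residueClass_nonneg _ _
  rcases Nat.eq_zero_or_pos n with rfl | hn
  · simp
  rw [LSeries.norm_term_eq, if_neg hn.ne', Complex.norm_real, Real.norm_of_nonneg h0]
  have h1 : (1:ℝ) ≤ n := by exact_mod_cast hn
  gcongr
  calc (n:ℝ) = (n:ℝ) ^ (1:ℝ) := (Real.rpow_one _).symm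
    _ ≤ _ := Real.rpow_le_rpow_of_exponent_le h1 hs

lemma npl_sum : Summable fun n : ℕ => npl n / n :=
  ArithmeticFunction.vonMangoldt.summable_residueClass_non_primes_div (1 : ZMod 4)

lemma npl_cont : ContinuousOn (fun s => LSeries (fun n => (npl n : ℂ)) s) {s | 1 ≤ s.re} := by
  unfold LSeries
  refine continuousOn_tsum (fun n => ?_) npl_sum (fun n s hs => npl_bound hs n)
  rcases eq_or_ne n 0 with rfl | hn
  · simp only [LSeries.term_zero]; exact continuousOn_const
  simp only [LSeries.term_of_ne_zero hn]
  have h0 : ((n : ℕ) : ℂ) ≠ 0 := by exact_mod_cast hn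
  apply Continuous.continuousOn
  refine continuous_const.div (continuous_id.const_cpow (Or.inl h0)) fun s => ?_
  rw [Complex.cpow_def_of_ne_zero h0]; exact Complex.exp_ne_zero _

lemma P_cont : ∃ K : ℂ → ℂ, ContinuousOn K {s | 1 ≤ s.re} ∧ ∀ s : ℂ, 1 < s.re →
    LSeries (fun n => (lgp n : ℂ)) s = (1 / 2) / (s - 1) + K s := by
  refine ⟨fun s => ArithmeticFunction.vonMangoldt.LFunctionResidueClassAux (1 : ZMod 4) s -
    LSeries (fun n => (npl n : ℂ)) s,
    (ArithmeticFunction.vonMangoldt.continuousOn_LFunctionResidueClassAux (1 : ZMod 4)).sub npl_cont, fun s hs => ?_⟩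
  have h1 := ArithmeticFunction.vonMangoldt.eqOn_LFunctionResidueClassAux (q := 4) (a := 1) isUnit_one hs
  have h2 : LSeriesSummable (fun n => (npl n : ℂ)) s :=
    Summable.of_norm_bounded npl_sum fun n => npl_bound hs.le n
  have h3 := LSeries_add (lgp_summable hs) h2
  have h4 : (fun n => (lgp n : ℂ)) + (fun n => (npl n : ℂ)) =
      fun n => ((ArithmeticFunction.vonMangoldt.residueClass (1 : ZMod 4) n : ℝ) : ℂ) := by
    ext n; rw [resid_eq]; simp
  rw [h4] at h3
  have h5 : Nat.totient 4 = 2 := by decide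
  rw [h5] at h1
  simp only [h1]
  rw [h3]
  push_cast
  ring

lemma cpow_re {n : ℕ} (hn : n ≠ 0) (σ t : ℝ) :
    (1 / (n : ℂ) ^ ((σ : ℂ) + t * Complex.I)).re = (n : ℝ) ^ (-σ) * Real.cos (t * Real.log n) := by
  have h0 : ((n : ℕ) : ℂ) ≠ 0 := by exact_mod_cast hn
  have hp : (0:ℝ) < n := by exact_mod_cast Nat.pos_of_ne_zero hn
  rw [one_div, ← Complex.cpow_neg, Complex.cpow_def_of_ne_zero h0, ← Complex.natCast_log, Complex.exp_re,
    Real.rpow_def_of_pos hp]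
  generalize Real.log n = L
  congr 1
  · congr 1; simp
  · rw [← Real.cos_neg]; congr 1; simp; ring

lemma three_four {σ t : ℝ} (hσ : 1 < σ) :
    0 ≤ (3 * LSeries (fun n => (lgp n : ℂ)) σ + 4 * LSeries (fun n => ((lgp n * xx n : ℝ) : ℂ)) (σ + t * Complex.I)
      + LSeries (fun n => (lgp n : ℂ)) (σ + (2 * t : ℝ) * Complex.I)).re := by
  have s1 := lgp_summable (s := (σ : ℂ)) (by simpa using hσ)
  have s2 := lgp_xx_summable (s := (σ : ℂ) + t * Complex.I) (by simpa using hσ)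
  have s3 := lgp_summable (s := (σ : ℂ) + (2 * t : ℝ) * Complex.I) (by simpa using hσ)
  unfold LSeriesSummable at s1 s2 s3
  unfold LSeries
  rw [← tsum_mul_left, ← tsum_mul_left, ← (s1.mul_left 3).tsum_add (s2.mul_left 4),
    ← ((s1.mul_left 3).add (s2.mul_left 4)).tsum_add s3,
    Complex.re_tsum (((s1.mul_left 3).add (s2.mul_left 4)).add s3)]
  refine tsum_nonneg fun n => ?_
  by_cases h : n.Prime ∧ n % 4 = 1
  · have hn := h.1.ne_zero
    have h1 := cpow_re hn σ 0
    have h2 := cpow_re hn σ t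
    have h3 := cpow_re hn σ (2 * t)
    rw [LSeries.term_of_ne_zero hn, LSeries.term_of_ne_zero hn, LSeries.term_of_ne_zero hn]
    simp only [Complex.ofReal_zero, zero_mul, add_zero, Real.cos_zero, mul_one] at h1
    have h4 : (3 * ((lgp n : ℂ) / (n:ℂ) ^ (σ:ℂ)) + 4 * (((lgp n * xx n : ℝ) : ℂ) / (n:ℂ) ^ ((σ:ℂ) + t * Complex.I))
        + (lgp n : ℂ) / (n:ℂ) ^ ((σ:ℂ) + (2 * t : ℝ) * Complex.I)) =
        ((3 * lgp n : ℝ) : ℂ) * (1 / (n:ℂ) ^ (σ:ℂ)) + ((4 * (lgp n * xx n) : ℝ) : ℂ) * (1 / (n:ℂ) ^ ((σ:ℂ) + t * Complex.I))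
        + ((lgp n : ℝ) : ℂ) * (1 / (n:ℂ) ^ ((σ:ℂ) + (2 * t : ℝ) * Complex.I)) := by
      push_cast; ring
    rw [h4, Complex.add_re, Complex.add_re, Complex.re_ofReal_mul, Complex.re_ofReal_mul, Complex.re_ofReal_mul,
      h1, h2, h3, mul_assoc 2 t, Real.cos_two_mul]
    have h5 := abs_le.mp (xx_abs h.1 h.2)
    set y := Real.cos (t * Real.log n)
    set x := xx n
    have h6 : 0 ≤ 3 + 4 * x * y + (2 * y ^ 2 - 1) := by nlinarith [sq_nonneg (x + y)]
    have h7 : 0 ≤ lgp n * (n:ℝ) ^ (-σ) := mul_nonneg (lgp_nonneg n) (by positivity)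
    have := mul_nonneg h7 h6
    linarith
  · have h0 : lgp n = 0 := if_neg h
    simp [LSeries.term, h0]

end PartE1

section PartE2

open Filter Topology

lemma hT_domain : IsOpen {s : ℂ | 3/4 < s.re} := isOpen_lt continuous_const Complex.continuous_re

lemma hT_analytic : AnalyticOnNhd ℂ hT {s | 3/4 < s.re} := hT_diff.analyticOnNhd hT_domain

lemma logder_limit {s₀ : ℂ} (hs : 1 ≤ s₀.re) : ∃ m : ℕ,
    Tendsto (fun z => (z - s₀) * (deriv hT z / hT z)) (𝓝[≠] s₀) (𝓝 (m : ℂ)) ∧ (m = 0 → hT s₀ ≠ 0) ∧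
    ∀ᶠ z in 𝓝[≠] s₀, hT z ≠ 0 := by
  have hs' : s₀ ∈ {s : ℂ | 3/4 < s.re} := by change 3/4 < s₀.re; linarith
  have ha := hT_analytic s₀ hs'
  have hnz : ¬ ∀ᶠ z in 𝓝 s₀, hT z = 0 := by
    intro h
    have hpc : IsPreconnected {s : ℂ | 3/4 < s.re} := (convex_halfSpace_re_gt (3/4)).isPreconnected
    have := hT_analytic.eqOn_zero_of_preconnected_of_eventuallyEq_zero hpc hs' h
    exact hT_one_ne (this (show (3/4:ℝ) < (1:ℂ).re by norm_num))
  obtain ⟨m, g, hg, hg0, hev⟩ := ha.exists_eventuallyEq_pow_smul_nonzero_iff.mpr hnz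
  refine ⟨m, ?_, ?_, ?_⟩
  · have h1 : ∀ᶠ z in 𝓝 s₀, deriv hT z = m * (z - s₀) ^ (m - 1) * g z + (z - s₀) ^ m * deriv g z := by
      filter_upwards [hev.eventually_nhds, hg.eventually_analyticAt] with z hz hgz
      have hz' : hT =ᶠ[𝓝 z] fun w => (w - s₀) ^ m * g w := hz
      rw [hz'.deriv_eq]
      have d1 : HasDerivAt (fun w : ℂ => (w - s₀) ^ m) (m * (z - s₀) ^ (m - 1) * 1) z :=
        ((hasDerivAt_id z).sub_const s₀).pow m
      rw [(d1.fun_mul hgz.differentiableAt.hasDerivAt).deriv, mul_one]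
    have h2 : ∀ᶠ z in 𝓝 s₀, g z ≠ 0 := hg.continuousAt.eventually_ne hg0
    have h3 : Tendsto (fun z => (m : ℂ) + (z - s₀) * (deriv g z / g z)) (𝓝[≠] s₀) (𝓝 ((m:ℂ) + (s₀ - s₀) * (deriv g s₀ / g s₀))) := by
      apply Tendsto.mono_left _ nhdsWithin_le_nhds
      apply ContinuousAt.tendsto (f := fun z => (m : ℂ) + (z - s₀) * (deriv g z / g z))
      exact continuousAt_const.add ((continuousAt_id.sub continuousAt_const).mul
        (hg.deriv.continuousAt.div hg.continuousAt hg0))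
    rw [sub_self, zero_mul, add_zero] at h3
    refine h3.congr' ?_
    filter_upwards [nhdsWithin_le_nhds h1, nhdsWithin_le_nhds h2, nhdsWithin_le_nhds hev, self_mem_nhdsWithin] with z a1 a2 a3 a4
    have a5 : z - s₀ ≠ 0 := sub_ne_zero.mpr a4
    rw [a1, a3, smul_eq_mul]
    rcases Nat.eq_zero_or_pos m with rfl | hm
    · simp
    · obtain ⟨k, rfl⟩ : ∃ k, m = k + 1 := ⟨m - 1, by omega⟩
      rw [Nat.add_sub_cancel, pow_succ]
      field_simp
  · rintro rfl
    rw [hev.self_of_nhds]; simpa using hg0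
  · filter_upwards [nhdsWithin_le_nhds (hg.continuousAt.eventually_ne hg0), nhdsWithin_le_nhds hev, self_mem_nhdsWithin] with z a2 a3 a4
    rw [a3, smul_eq_mul]
    exact mul_ne_zero (pow_ne_zero _ (sub_ne_zero.mpr a4)) a2

lemma V_eq {s : ℂ} (hs : 1 < s.re) (h0 : hT s ≠ 0) : (∑' x, vterm s x) = -(deriv hT s / hT s) := by
  rw [← neg_div, eq_div_iff h0, hT_deriv hs]

lemma hT_ne_gt {s₀ : ℂ} (hs : 1 < s₀.re) : hT s₀ ≠ 0 := by
  obtain ⟨m, h1, h2, h3⟩ := logder_limit hs.le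
  apply h2
  set σ := (1 + s₀.re) / 2 with hσd
  have hσ : 1 < σ := by linarith
  have a1 : Summable fun π : GW => Real.log (gN (π : GaussianInt)) * (gN (π : GaussianInt) : ℝ) ^ (-σ) :=
    (log_gN_summable hσ).comp_injective Subtype.val_injective
  have a3 := a1.mul_of_nonneg (summable_geometric_two) (fun π => mul_nonneg (log_gN_nonneg _) (by positivity)) (fun k => by positivity)
  have hb : ∀ z : ℂ, σ ≤ z.re → ‖∑' x, vterm z x‖ ≤ ∑' x : GW × ℕ, Real.log (gN (x.1 : GaussianInt)) * (gN (x.1 : GaussianInt) : ℝ) ^ (-σ) * (1/2) ^ x.2 :=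
    fun z hz => tsum_of_norm_bounded a3.hasSum fun x => vterm_norm hσ.le hz x
  have hU : ∀ᶠ z in 𝓝[≠] s₀, σ < z.re :=
    nhdsWithin_le_nhds ((isOpen_lt continuous_const Complex.continuous_re).mem_nhds (show σ < s₀.re by linarith))
  have h4 : Tendsto (fun z => (z - s₀) * (deriv hT z / hT z)) (𝓝[≠] s₀) (𝓝 0) := by
    have h5 : Tendsto (fun z => z - s₀) (𝓝[≠] s₀) (𝓝 0) := by
      have : Tendsto (fun z => z - s₀) (𝓝 s₀) (𝓝 (s₀ - s₀)) := (continuous_id.sub continuous_const).tendsto s₀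
      rw [sub_self] at this
      exact this.mono_left nhdsWithin_le_nhds
    refine h5.zero_mul_isBoundedUnder_le ?_
    refine isBoundedUnder_of_eventually_le (a := ∑' x : GW × ℕ, Real.log (gN (x.1 : GaussianInt)) * (gN (x.1 : GaussianInt) : ℝ) ^ (-σ) * (1/2) ^ x.2) ?_
    filter_upwards [hU, h3] with z hz hz2
    have := V_eq (s := z) (by linarith) hz2
    simp only [Function.comp]
    rw [← norm_neg, ← this]
    exact hb z hz.le
  exact_mod_cast tendsto_nhds_unique h1 h4

lemma hT_ne_line {t : ℝ} (ht : t ≠ 0) : hT (1 + t * Complex.I) ≠ 0 := by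
  set s₀ : ℂ := 1 + t * Complex.I with hs₀
  have hre : s₀.re = 1 := by simp [hs₀]
  obtain ⟨m, h1, h2, h3⟩ := logder_limit hre.ge
  apply h2
  obtain ⟨KP, kp1, kp2⟩ := P_cont
  obtain ⟨KV, kv1, kv2⟩ := V_decomp
  have cl : ∀ u : ℝ, Tendsto (fun σ : ℝ => (σ : ℂ) + u * Complex.I) (𝓝[>] 1) (𝓝[{s | 1 ≤ s.re}] (1 + u * Complex.I)) := by
    intro u
    refine tendsto_nhdsWithin_iff.mpr ⟨?_, ?_⟩
    · have : Continuous fun σ : ℝ => (σ : ℂ) + u * Complex.I := by fun_prop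
      have h := this.tendsto 1
      rw [Complex.ofReal_one] at h
      exact h.mono_left nhdsWithin_le_nhds
    · filter_upwards [self_mem_nhdsWithin] with σ hσ
      have : 1 < σ := hσ
      simpa using this.le
  have cd : Tendsto (fun σ : ℝ => ((σ : ℂ) - 1)) (𝓝[>] 1) (𝓝 0) := by
    have : Continuous fun σ : ℝ => ((σ : ℂ) - 1) := by fun_prop
    have h := this.tendsto 1
    rw [Complex.ofReal_one, sub_self] at h
    exact h.mono_left nhdsWithin_le_nhds
  have cK : ∀ (K : ℂ → ℂ), ContinuousOn K {s | 1 ≤ s.re} → ∀ u : ℝ,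
      Tendsto (fun σ : ℝ => ((σ : ℂ) - 1) * K ((σ : ℂ) + u * Complex.I)) (𝓝[>] 1) (𝓝 0) := by
    intro K hK u
    have h : Tendsto K (𝓝[{s | 1 ≤ s.re}] (1 + u * Complex.I)) (𝓝 (K (1 + u * Complex.I))) :=
      hK _ (by simp)
    simpa using cd.mul (h.comp (cl u))
  have e0 : ∀ᶠ σ : ℝ in 𝓝[>] 1, 1 < σ := self_mem_nhdsWithin
  -- P at real points
  have p1 : Tendsto (fun σ : ℝ => ((σ : ℂ) - 1) * LSeries (fun n => (lgp n : ℂ)) σ) (𝓝[>] 1) (𝓝 (1/2)) := by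
    have h := (cK KP kp1 0).const_add (1/2)
    rw [add_zero] at h
    refine h.congr' ?_
    filter_upwards [e0] with σ hσ
    have : (σ : ℂ) - 1 ≠ 0 := by
      rw [sub_ne_zero]; exact_mod_cast hσ.ne'
    rw [kp2 σ (by simpa using hσ)]
    simp only [Complex.ofReal_zero, zero_mul, add_zero]
    field_simp
  have p2 : Tendsto (fun σ : ℝ => ((σ : ℂ) - 1) * LSeries (fun n => (lgp n : ℂ)) (σ + (2 * t : ℝ) * Complex.I)) (𝓝[>] 1) (𝓝 0) := by
    have h4 : ((1:ℂ) + (2 * t : ℝ) * Complex.I - 1) ≠ 0 := by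
      simp [ht]
    have h5 : Tendsto (fun σ : ℝ => (1/2) / ((σ:ℂ) + (2 * t : ℝ) * Complex.I - 1)) (𝓝[>] 1) (𝓝 ((1/2) / ((1:ℂ) + (2 * t : ℝ) * Complex.I - 1))) := by
      refine tendsto_const_nhds.div ?_ h4
      exact ((cl (2 * t)).mono_right nhdsWithin_le_nhds).sub_const 1
    have h := (cd.mul h5).add (cK KP kp1 (2 * t))
    rw [zero_mul, add_zero] at h
    refine h.congr' ?_
    filter_upwards [e0] with σ hσ
    rw [kp2 _ (by simpa using hσ)]
    ring
  have q1 : Tendsto (fun σ : ℝ => ((σ : ℂ) - 1) * LSeries (fun n => ((lgp n * xx n : ℝ) : ℂ)) (σ + t * Complex.I)) (𝓝[>] 1) (𝓝 (-(m:ℂ)/2)) := by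
    have c2 : Tendsto (fun σ : ℝ => (σ : ℂ) + t * Complex.I) (𝓝[>] 1) (𝓝[≠] s₀) := by
      refine tendsto_nhdsWithin_iff.mpr ⟨(cl t).mono_right nhdsWithin_le_nhds, ?_⟩
      filter_upwards [e0] with σ hσ h
      have := congrArg Complex.re h
      simp [hs₀] at this
      linarith
    have h5 := h1.comp c2
    have h6 := ((h5.neg).sub (cK KV kv1 t)).div_const 2
    rw [sub_zero] at h6
    refine h6.congr' ?_
    filter_upwards [e0, c2.eventually h3] with σ hσ hne
    have hσ' : 1 < ((σ : ℂ) + t * Complex.I).re := by simpa using hσ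
    have h7 := V_eq hσ' hne
    rw [kv2 _ hσ'] at h7
    simp only [Function.comp]
    have h8 : (σ : ℂ) + t * Complex.I - s₀ = σ - 1 := by rw [hs₀]; ring
    rw [h8]
    linear_combination (-(σ - 1 : ℂ) / 2) * h7
  have hlim := ((p1.const_mul 3).add (q1.const_mul 4)).add p2
  have hre2 := (Complex.continuous_re.tendsto _).comp hlim
  have hnn : 0 ≤ ((3:ℂ) * (1/2) + 4 * (-(m:ℂ)/2) + 0).re := by
    refine ge_of_tendsto hre2 ?_
    filter_upwards [e0] with σ hσ
    have h9 := three_four (t := t) hσ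
    simp only [Function.comp]
    have h10 : (3:ℂ) * (((σ:ℂ) - 1) * LSeries (fun n => (lgp n : ℂ)) σ) +
        4 * (((σ:ℂ) - 1) * LSeries (fun n => ((lgp n * xx n : ℝ) : ℂ)) (σ + t * Complex.I)) +
        ((σ:ℂ) - 1) * LSeries (fun n => (lgp n : ℂ)) (σ + (2 * t : ℝ) * Complex.I) =
        ((σ - 1 : ℝ) : ℂ) * (3 * LSeries (fun n => (lgp n : ℂ)) σ + 4 * LSeries (fun n => ((lgp n * xx n : ℝ) : ℂ)) (σ + t * Complex.I)
      + LSeries (fun n => (lgp n : ℂ)) (σ + (2 * t : ℝ) * Complex.I)) := by push_cast; ring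
    rw [h10, Complex.re_ofReal_mul]
    exact mul_nonneg (by linarith) h9
  have h11 : ((3:ℂ) * (1/2) + 4 * (-(m:ℂ)/2) + 0) = ((3/2 - 2 * m : ℝ) : ℂ) := by push_cast; ring
  rw [h11, Complex.ofReal_re] at hnn
  have h12 : (m:ℝ) < 1 := by linarith
  have : m < 1 := by exact_mod_cast h12
  omega

lemma hT_ne {s : ℂ} (hs : 1 ≤ s.re) : hT s ≠ 0 := by
  rcases hs.lt_or_eq with h | h
  · exact hT_ne_gt h
  · have h2 : s = 1 + (s.im : ℂ) * Complex.I := by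
      apply Complex.ext <;> simp [h.symm]
    by_cases h3 : s.im = 0
    · rw [h2, h3]; simpa using hT_one_ne
    · rw [h2]; exact hT_ne_line h3

lemma G_cont : ∃ H : ℂ → ℂ, ContinuousOn H {s | 1 ≤ s.re} ∧ ∀ s : ℂ, 1 < s.re →
    LSeries (fun n => ((lgp n * (2 + 2 * xx n) : ℝ) : ℂ)) s = 1 / (s - 1) + H s := by
  obtain ⟨KP, kp1, kp2⟩ := P_cont
  obtain ⟨KV, kv1, kv2⟩ := V_decomp
  have hsub : {s : ℂ | 1 ≤ s.re} ⊆ {s | 3/4 < s.re} := fun s hs => by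
    have : 1 ≤ s.re := hs
    change 3/4 < s.re; linarith
  refine ⟨fun s => 2 * KP s - deriv hT s / hT s - KV s, ?_, fun s hs => ?_⟩
  · refine ((continuousOn_const.mul kp1).sub (ContinuousOn.div ?_ ?_ fun s hs => hT_ne hs)).sub kv1
    · exact hT_analytic.deriv.continuousOn.mono hsub
    · exact hT_analytic.continuousOn.mono hsub
  · have h1 := V_eq hs (hT_ne hs.le)
    rw [kv2 s hs] at h1
    have h2 : LSeries (fun n => ((lgp n * (2 + 2 * xx n) : ℝ) : ℂ)) s =
        2 * LSeries (fun n => (lgp n : ℂ)) s + 2 * LSeries (fun n => ((lgp n * xx n : ℝ) : ℂ)) s := by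
      rw [LSeries, LSeries, LSeries, ← tsum_mul_left, ← tsum_mul_left,
        ← Summable.tsum_add ((lgp_summable hs).mul_left 2) ((lgp_xx_summable hs).mul_left 2)]
      congr 1; ext n
      rcases eq_or_ne n 0 with rfl | hn
      · simp
      simp only [LSeries.term_of_ne_zero hn]; push_cast; ring
    rw [h2, kp2 s hs]
    linear_combination h1

lemma g_nonneg (n : ℕ) : 0 ≤ lgp n * (2 + 2 * xx n) := by
  have := abs_le.mp (lgp_xx_le n)
  nlinarith [this.1]

lemma lgp_cheb (N : ℕ) : ∑ n ∈ Finset.Icc 1 N, lgp n ≤ Real.log 4 * N := by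
  have h := Chebyshev.theta_le_log4_mul_x (x := (N:ℝ)) (by positivity)
  refine le_trans ?_ h
  rw [Chebyshev.theta, Nat.floor_natCast, Finset.sum_filter]
  have : Finset.Ioc 0 N = Finset.Icc 1 N := by ext; simp; omega
  rw [this]
  refine Finset.sum_le_sum fun n _ => ?_
  unfold lgp
  split_ifs with h1 h2 h2
  · exact le_rfl
  · exact absurd h1.1 h2
  · exact Real.log_natCast_nonneg _
  · exact le_rfl

lemma g_cheb (N : ℕ) : ∑ n ∈ Finset.Icc 1 N, lgp n * (2 + 2 * xx n) ≤ 4 * Real.log 4 * N := by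
  calc _ ≤ ∑ n ∈ Finset.Icc 1 N, 4 * lgp n := by
        refine Finset.sum_le_sum fun n _ => ?_
        have := abs_le.mp (lgp_xx_le n)
        nlinarith [this.2]
    _ ≤ _ := by rw [← Finset.mul_sum, mul_assoc]; have := lgp_cheb N; linarith

lemma g_eq {n : ℕ} (hn : n.Prime) (h2 : n ≠ 2) : -(nagaoAverage n) * Real.log n = lgp n * (2 + 2 * xx n) := by
  have := Fact.mk hn
  by_cases h : n % 4 = 1
  · have : lgp n = Real.log n := if_pos ⟨hn, h⟩
    rw [this]; unfold xx; ring
  · have h3 : n % 4 = 3 := by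
      have := hn.eq_two_or_odd
      omega
    have h4 : lgp n = 0 := if_neg fun h5 => h h5.2
    rw [h4, nagao_eq (p := n) h2, jac_three (p := n) h3]; simp

theorem final_thm :
    Tendsto
      (fun N : ℕ => (1 / (N : ℝ)) *
        ∑ p ∈ Finset.range (N + 1) |>.filter (fun p => p.Prime ∧ p ≠ 2),
          (-(nagaoAverage p)) * Real.log p)
      atTop (nhds 1) := by
  obtain ⟨H, h1, h2⟩ := G_cont
  have h := wiener_ikehara (fun n => lgp n * (2 + 2 * xx n)) g_nonneg _ g_cheb H h1 h2
  refine h.congr fun N => ?_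
  rw [div_eq_mul_one_div, mul_comm]
  congr 1
  symm
  rw [Finset.sum_congr rfl fun p hp => g_eq (Finset.mem_filter.mp hp).2.1 (Finset.mem_filter.mp hp).2.2]
  refine Finset.sum_subset_zero_on_sdiff ?_ ?_ fun _ _ => rfl
  · intro p hp
    simp only [Finset.mem_filter, Finset.mem_range] at hp
    have := hp.2.1.pos
    simp; omega
  · intro p hp
    simp only [Finset.mem_sdiff, Finset.mem_filter, Finset.mem_range, Finset.mem_Icc] at hp
    have : lgp p = 0 := if_neg fun h5 => hp.2 ⟨by omega, h5.1, by rintro rfl; omega⟩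
    rw [this, zero_mul]

end PartE2

/-- Nagao's limit formula holds for the elliptic surface
`𝓔 : y² = x³ + (T³ + T)² x`:
`lim_{N → ∞} (1/N) Σ_{odd primes p ≤ N} (−A_p(𝓔)) log p = 1`. -/
theorem nagao_conjecture_for_twist_of_CM_curve :
    Tendsto
      (fun N : ℕ => (1 / (N : ℝ)) *
        ∑ p ∈ Finset.range (N + 1) |>.filter (fun p => p.Prime ∧ p ≠ 2),
          (-(nagaoAverage p)) * Real.log p)
      atTop (nhds 1) := by
  exact final_thm
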